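/- $\sum_{n=1}^{\infty} \frac{(-1)^n}{n^3 \binom{2n}{n}}\left(10 \sum_{j=1}^{n} \frac{(-1)^j}{j^2} - \frac{(-1)^n}{n^2}\right) = \frac{29\,\zeta(5)}{6} - \frac{\pi^2 \zeta(3)}{18}$. -/

import Mathlib

open Filter Topology

/-- Alternating harmonic-type sum `∑_{j=1}^n (-1)^j / j^s`. -/
noncomputable def A (s n : ℕ) : ℝ := ∑ j ∈ Finset.range n, (-1:ℝ)^(j+1) / ((j:ℝ) + 1) ^ s

/-- The Riemann zeta value `ζ(s) = ∑_{n ≥ 1} 1/n^s`. -/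
noncomputable def zeta (s : ℕ) : ℝ := ∑' n : ℕ, 1 / ((n:ℝ) + 1) ^ s

/-!
A Wilf–Zeilberger telescoping of the central binomial sums behind Apéry's formulas for `ζ(2)` and
`ζ(3)`, followed by summation by parts, splits the series into `∑ 1 / (n ^ 5 * binom (2 n, n))`, a
double series and a linear Euler sum. With `v = 2 sin x` as variable the first two become integrals
over `(0, π / 6)` involving `log (2 sin x) ^ 2`. The square of the logarithm is removed by deforming
the real integral of `log² w log² (1 - w) / w` over `(0, 1)`, a combination of `ζ(5)` and
`π² ζ(3)`, to the arcs `w = 1 - exp (-2 i x)` and `w = exp (2 i x)`, which meet at `exp (i π / 3)`.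
The remaining integrals of polynomials times `log (2 sin x)` are evaluated by the Fourier series of
`log (2 sin x)`.
-/

namespace AlternatingApery

open Real MeasureTheory Polynomial

theorem summable_one_div_succ_pow {s : ℕ} (hs : 2 ≤ s) :
    Summable fun n : ℕ ↦ 1 / ((n : ℝ) + 1) ^ s := by
  simpa using (summable_nat_add_iff 1).mpr (Real.summable_one_div_nat_pow.mpr (by lia : 1 < s))

theorem hasSum_zeta {s : ℕ} (hs : 2 ≤ s) :
    HasSum (fun n : ℕ ↦ 1 / ((n : ℝ) + 1) ^ s) (zeta s) :=
  (summable_one_div_succ_pow hs).hasSum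

theorem zeta_two : zeta 2 = π ^ 2 / 6 := by
  have h := (hasSum_nat_add_iff' 1).mpr hasSum_zeta_two
  exact (hasSum_zeta le_rfl).unique (by simpa using h)

theorem hasSum_alternating_zeta {s : ℕ} (hs : 2 ≤ s) :
    HasSum (fun n : ℕ ↦ (-1 : ℝ) ^ (n + 1) / ((n : ℝ) + 1) ^ s) (-(1 - 2 / 2 ^ s) * zeta s) := by
  set f : ℕ → ℝ := fun n ↦ 1 / ((n : ℝ) + 1) ^ s with hf
  have hodd : HasSum (fun j ↦ f (2 * j + 1)) (1 / 2 ^ s * zeta s) := by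
    refine ((hasSum_zeta hs).mul_left (1 / 2 ^ s)).congr_fun fun j ↦ ?_
    simp only [hf]
    push_cast
    rw [show 2 * (j : ℝ) + 1 + 1 = 2 * (j + 1) by ring, mul_pow, one_div_mul_one_div]
  have heven : Summable fun j ↦ f (2 * j) :=
    (summable_one_div_succ_pow hs).comp_injective (mul_right_injective₀ two_ne_zero)
  have heven_value : ∑' j, f (2 * j) = zeta s - 1 / 2 ^ s * zeta s :=
    eq_sub_of_add_eq ((heven.hasSum.even_add_odd hodd).unique (hasSum_zeta hs))
  convert HasSum.even_add_odd (f := fun n : ℕ ↦ (-1 : ℝ) ^ (n + 1) / ((n : ℝ) + 1) ^ s)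
    (m := -∑' j, f (2 * j)) (m' := 1 / 2 ^ s * zeta s) ?_ ?_ using 1
  · rw [heven_value]; ring
  · exact heven.hasSum.neg.congr_fun fun j ↦ by simp [hf, pow_succ, pow_mul, neg_div]
  · exact hodd.congr_fun fun j ↦ by simp [hf, pow_succ, pow_mul]

/-- The alternating term `(-1)ⁿ / n²`, with the index shifted to start at `0`. -/
noncomputable def altInvSq (n : ℕ) : ℝ := (-1 : ℝ) ^ (n + 1) / ((n : ℝ) + 1) ^ 2

theorem A_two_succ (n : ℕ) : A 2 (n + 1) = A 2 n + altInvSq n :=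
  Finset.sum_range_succ _ _

theorem two_pow_le_centralBinom (n : ℕ) : 2 ^ n ≤ n.centralBinom := by
  induction n with
  | zero => simp
  | succ n ih =>
    refine Nat.le_of_mul_le_mul_left (c := n + 1) ?_ n.succ_pos
    calc (n + 1) * 2 ^ (n + 1) = 2 * (n + 1) * 2 ^ n := by ring
      _ ≤ 2 * (2 * n + 1) * n.centralBinom := by gcongr; lia
      _ = (n + 1) * (n + 1).centralBinom := (Nat.succ_mul_centralBinom_succ n).symm

/-- The summand of Apéry's finite double sum for `ζ(3)`; only the range `k < N` is meaningful,
where the subtraction is not truncated. -/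
noncomputable def aperySummand (N k : ℕ) : ℝ :=
  (-1 : ℝ) ^ k * ((k + 1).factorial : ℝ) ^ 2 * ((N - k - 1).factorial : ℝ) /
    (((k : ℝ) + 1) ^ 3 * ((N + k + 1).factorial : ℝ))

/-- The correction term in Apéry's acceleration of `ζ(3)`. -/
noncomputable def aperySum (N : ℕ) : ℝ := ∑ k ∈ Finset.range N, aperySummand N k

/-- The companion of `aperySummand` in its Wilf–Zeilberger pair. -/
noncomputable def aperyCertificate (N j : ℕ) : ℝ :=
  (-1 : ℝ) ^ j * (j.factorial : ℝ) ^ 2 * ((N - j).factorial : ℝ) /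
    (((N : ℝ) + 1) ^ 2 * ((N + 1 + j).factorial : ℝ))

theorem aperySummand_succ_sub {N k : ℕ} (h : k < N) :
    aperySummand (N + 1) k - aperySummand N k =
      2 * (aperyCertificate N (k + 1) - aperyCertificate N k) := by
  obtain ⟨d, rfl⟩ := Nat.exists_eq_add_of_lt h
  unfold aperySummand aperyCertificate
  rw [show k + d + 1 + 1 - k - 1 = d + 1 by lia, show k + d + 1 - k - 1 = d by lia,
    show k + d + 1 - (k + 1) = d by lia, show k + d + 1 - k = d + 1 by lia,
    show k + d + 1 + 1 + k + 1 = (2 * k + d + 2) + 1 by lia,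
    show k + d + 1 + k + 1 = 2 * k + d + 2 by lia,
    show k + d + 1 + 1 + (k + 1) = (2 * k + d + 2) + 1 by lia,
    show k + d + 1 + 1 + k = 2 * k + d + 2 by lia]
  have : ((2 * k + d + 2).factorial : ℝ) ≠ 0 := by positivity
  have : (k.factorial : ℝ) ≠ 0 := by positivity
  have : (d.factorial : ℝ) ≠ 0 := by positivity
  have : (k : ℝ) + d + 1 + 1 ≠ 0 := by positivity
  have : 2 * (k : ℝ) + d + 2 + 1 ≠ 0 := by positivity
  simp only [Nat.factorial_succ, Nat.cast_mul, Nat.cast_add, Nat.cast_one, Nat.cast_ofNat,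
    pow_succ] at *
  field_simp
  ring

theorem aperyCertificate_zero (N : ℕ) : aperyCertificate N 0 = 1 / ((N : ℝ) + 1) ^ 3 := by
  have : (N.factorial : ℝ) ≠ 0 := by positivity
  simp [aperyCertificate, Nat.factorial_succ]
  field_simp

theorem centralBinom_succ_eq_factorial (N : ℕ) :
    ((N + 1).centralBinom : ℝ) = (2 * N + 2).factorial / ((N + 1).factorial : ℝ) ^ 2 := by
  rw [Nat.centralBinom_eq_two_mul_choose, Nat.cast_choose ℝ (by lia),
    show 2 * (N + 1) - (N + 1) = N + 1 by lia, sq, mul_add_one]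

theorem aperyCertificate_self (N : ℕ) :
    aperyCertificate N N = 2 * (-1 : ℝ) ^ N / (((N : ℝ) + 1) ^ 3 * (N + 1).centralBinom) := by
  rw [aperyCertificate, centralBinom_succ_eq_factorial, Nat.sub_self,
    show N + 1 + N = 2 * N + 1 by ring, Nat.factorial_succ N, Nat.factorial_succ (2 * N + 1)]
  push_cast
  field_simp
  simp
  ring

theorem aperySummand_succ_self (N : ℕ) :
    aperySummand (N + 1) N = (-1 : ℝ) ^ N / (((N : ℝ) + 1) ^ 3 * (N + 1).centralBinom) := by
  rw [aperySummand, centralBinom_succ_eq_factorial, show N + 1 - N - 1 = 0 by lia,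
    show N + 1 + N + 1 = 2 * N + 2 by ring]
  field_simp
  simp

theorem aperySum_succ_sub (N : ℕ) :
    aperySum (N + 1) - aperySum N =
      5 * (-1 : ℝ) ^ N / (((N : ℝ) + 1) ^ 3 * (N + 1).centralBinom) - 2 / ((N : ℝ) + 1) ^ 3 := by
  have telescope : ∑ k ∈ Finset.range N, aperySummand (N + 1) k - aperySum N =
      2 * (aperyCertificate N N - aperyCertificate N 0) := by
    rw [aperySum, ← Finset.sum_sub_distrib, ← Finset.sum_range_sub, Finset.mul_sum]
    exact Finset.sum_congr rfl fun k hk ↦ aperySummand_succ_sub (Finset.mem_range.mp hk)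
  rw [aperySum, Finset.sum_range_succ, add_sub_right_comm, telescope, aperyCertificate_self,
    aperyCertificate_zero, aperySummand_succ_self]
  ring

theorem factorial_sq_mul_factorial_mul_le {a : ℕ} (ha : 1 ≤ a) (d : ℕ) :
    a.factorial ^ 2 * d.factorial * (a + d + 1) ≤ (2 * a + d).factorial := by
  have hchoose : a + d + 1 ≤ (a + d + a).choose a := by
    calc a + d + 1 = (a + d + 1).choose (a + d) := by simp
      _ ≤ (a + d + a).choose (a + d) := Nat.choose_le_choose _ (by lia)
      _ = (a + d + a).choose a := Nat.choose_symm_add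
  calc a.factorial ^ 2 * d.factorial * (a + d + 1)
      = (a + d + 1) * (a.factorial * d.factorial) * a.factorial := by ring
    _ ≤ (a + d + a).choose a * (a + d).factorial * a.factorial := by
      gcongr
      exact Nat.le_of_dvd (Nat.factorial_pos _) (Nat.factorial_mul_factorial_dvd_factorial_add a d)
    _ = (2 * a + d).factorial := by
      rw [Nat.add_choose_mul_factorial_mul_factorial]
      congr 1; ring

theorem abs_aperySummand_le {N k : ℕ} (h : k < N) :
    |aperySummand N k| ≤ 1 / ((k : ℝ) + 1) ^ 3 * (1 / ((N : ℝ) + 1)) := by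
  obtain ⟨d, rfl⟩ := Nat.exists_eq_add_of_lt h
  have hfact : ((k + 1).factorial : ℝ) ^ 2 * d.factorial * (k + 1 + d + 1) ≤
      (2 * (k + 1) + d).factorial := mod_cast factorial_sq_mul_factorial_mul_le k.succ_pos d
  rw [aperySummand, show k + d + 1 - k - 1 = d by lia,
    show k + d + 1 + k + 1 = 2 * (k + 1) + d by ring, abs_div, abs_mul, abs_mul, abs_pow, abs_neg,
    abs_one, one_pow, one_mul, abs_of_nonneg (by positivity), abs_of_nonneg (by positivity),
    abs_of_pos (by positivity), one_div_mul_one_div,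
    div_le_div_iff₀ (by positivity) (by positivity)]
  push_cast
  calc ((k + 1).factorial : ℝ) ^ 2 * d.factorial * (((k : ℝ) + 1) ^ 3 * (k + d + 1 + 1))
      = ((k : ℝ) + 1) ^ 3 * (((k + 1).factorial : ℝ) ^ 2 * d.factorial * (k + 1 + d + 1)) := by
        ring
    _ ≤ 1 * (((k : ℝ) + 1) ^ 3 * (2 * (k + 1) + d).factorial) := by rw [one_mul]; gcongr

theorem tendsto_aperySum : Tendsto aperySum atTop (𝓝 0) := by
  refine squeeze_zero_norm (a := fun N : ℕ ↦ zeta 3 * (1 / ((N : ℝ) + 1))) (fun N ↦ ?_)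
    (by simpa using tendsto_one_div_add_atTop_nhds_zero_nat.const_mul (zeta 3))
  calc |aperySum N| ≤ ∑ k ∈ Finset.range N, |aperySummand N k| := Finset.abs_sum_le_sum_abs _ _
    _ ≤ ∑ k ∈ Finset.range N, 1 / ((k : ℝ) + 1) ^ 3 * (1 / ((N : ℝ) + 1)) :=
      Finset.sum_le_sum fun k hk ↦ abs_aperySummand_le (Finset.mem_range.mp hk)
    _ = (∑ k ∈ Finset.range N, 1 / ((k : ℝ) + 1) ^ 3) * (1 / ((N : ℝ) + 1)) := by
      rw [Finset.sum_mul]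
    _ ≤ zeta 3 * (1 / ((N : ℝ) + 1)) := by
      gcongr
      exact (summable_one_div_succ_pow (by norm_num)).sum_le_tsum _ fun i _ ↦ by positivity

/-- The series `∑ 1 / (n⁵ binom(2n, n))`. -/
noncomputable def centralBinomFive : ℝ := ∑' n : ℕ, 1 / (((n : ℝ) + 1) ^ 5 * (n + 1).centralBinom)

theorem hasSum_centralBinomFive :
    HasSum (fun n : ℕ ↦ 1 / (((n : ℝ) + 1) ^ 5 * (n + 1).centralBinom)) centralBinomFive := by
  refine (Summable.of_nonneg_of_le (fun n ↦ by positivity) (fun n ↦ ?_)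
    (summable_one_div_succ_pow (by norm_num : 2 ≤ 5))).hasSum
  have : (1 : ℝ) ≤ (n + 1).centralBinom := mod_cast Nat.centralBinom_pos _
  gcongr
  exact le_mul_of_one_le_right (by positivity) this

/-- The absolute value of `altInvSq (k + m) * aperySummand (k + m + 1) k`, as a function of the
pair `(k, m)`. -/
noncomputable def aperyKernel (p : ℕ × ℕ) : ℝ :=
  ((p.1 + 1).factorial : ℝ) ^ 2 * (p.2.factorial : ℝ) /
    (((p.1 : ℝ) + 1) ^ 3 * ((p.1 : ℝ) + p.2 + 1) ^ 2 * ((2 * p.1 + p.2 + 2).factorial : ℝ))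

theorem aperyKernel_nonneg (p : ℕ × ℕ) : 0 ≤ aperyKernel p := by unfold aperyKernel; positivity

theorem altInvSq_mul_aperySummand (k m : ℕ) :
    altInvSq (k + m) * aperySummand (k + m + 1) k = -((-1) ^ m * aperyKernel (k, m)) := by
  have hsign : (-1 : ℝ) ^ (k + m + 1) * (-1) ^ k = -(-1) ^ m := by
    rw [← pow_add, show k + m + 1 + k = 2 * k + (m + 1) by ring, pow_add, pow_mul, neg_one_sq,
      one_pow, one_mul, pow_succ, mul_neg_one]
  rw [altInvSq, aperySummand, aperyKernel, show k + m + 1 - k - 1 = m by lia,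
    show k + m + 1 + k + 1 = 2 * k + m + 2 by ring, div_mul_div_comm, ← mul_assoc, ← mul_assoc,
    hsign, ← mul_div_assoc, ← neg_div]
  push_cast
  congr 1 <;> ring

theorem summable_aperyKernel : Summable aperyKernel := by
  have hs := summable_one_div_succ_pow (s := 2) le_rfl
  refine .of_nonneg_of_le aperyKernel_nonneg (fun ⟨k, m⟩ ↦ ?_)
    (hs.mul_of_nonneg hs (fun n ↦ by positivity) (fun n ↦ by positivity))
  have hfact : ((k + 1).factorial : ℝ) ^ 2 * m.factorial * (k + 1 + m + 1) ≤
      (2 * k + m + 2).factorial := by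
    rw [show 2 * k + m + 2 = 2 * (k + 1) + m by ring]
    exact_mod_cast factorial_sq_mul_factorial_mul_le k.succ_pos m
  have hk : (1 : ℝ) ≤ k + 1 := by simp
  have hm : (m : ℝ) + 1 ≤ k + m + 1 := by simp
  rw [aperyKernel, one_div_mul_one_div, div_le_div_iff₀ (by positivity) (by positivity), one_mul]
  calc ((k + 1).factorial : ℝ) ^ 2 * m.factorial * (((k : ℝ) + 1) ^ 2 * ((m : ℝ) + 1) ^ 2)
      ≤ ((k + 1).factorial : ℝ) ^ 2 * m.factorial * (k + 1 + m + 1) *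
          (((k : ℝ) + 1) ^ 2 * (k + m + 1) ^ 2) := by
        gcongr ?_ * (_ * ?_ ^ 2)
        exact le_mul_of_one_le_right (by positivity) (by linarith)
    _ ≤ (2 * k + m + 2).factorial * (((k : ℝ) + 1) ^ 3 * (k + m + 1) ^ 2) := by
        gcongr ?_ * (?_ * _)
        exact pow_le_pow_right₀ hk (by norm_num)
    _ = _ := by ring

/-- The double series into which `∑ (-1)ⁿ / n² * aperySum n` unfolds, up to sign. -/
noncomputable def aperyDouble : ℝ := ∑' p : ℕ × ℕ, (-1) ^ p.2 * aperyKernel p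

theorem hasSum_aperyDouble :
    HasSum (fun p : ℕ × ℕ ↦ (-1) ^ p.2 * aperyKernel p) aperyDouble := by
  refine (Summable.of_norm (summable_aperyKernel.congr fun p ↦ ?_)).hasSum
  rw [norm_mul, norm_pow, norm_neg, norm_one, one_pow, one_mul,
    Real.norm_of_nonneg (aperyKernel_nonneg p)]

theorem hasSum_antidiagonal {f : ℕ × ℕ → ℝ} {a : ℝ} (h : HasSum f a) :
    HasSum (fun n ↦ ∑ p ∈ Finset.HasAntidiagonal.antidiagonal n, f p) a := by
  have := (Finset.HasAntidiagonal.sigmaAntidiagonalEquivProd.hasSum_iff.mpr h).sigma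
    fun n ↦ hasSum_fintype _
  refine this.congr_fun fun n ↦ (Finset.sum_coe_sort _ f).symm

theorem hasSum_altInvSq_mul_aperySum :
    HasSum (fun n : ℕ ↦ altInvSq n * aperySum (n + 1)) (-aperyDouble) := by
  refine (hasSum_antidiagonal hasSum_aperyDouble.neg).congr_fun fun n ↦ ?_
  rw [aperySum, Finset.mul_sum, ← Finset.Nat.sum_antidiagonal_eq_sum_range_succ_mk
    (f := fun p : ℕ × ℕ ↦ altInvSq n * aperySummand (n + 1) p.1)]
  refine Finset.sum_congr rfl fun ⟨k, m⟩ hp ↦ ?_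
  obtain rfl : k + m = n := Finset.HasAntidiagonal.mem_antidiagonal.mp hp
  exact altInvSq_mul_aperySummand k m

/-- The summand of the series to be evaluated. -/
noncomputable def mainTerm (n : ℕ) : ℝ :=
  (-1 : ℝ) ^ (n + 1) / (((n : ℝ) + 1) ^ 3 * (n + 1).centralBinom) *
    (10 * A 2 (n + 1) - (-1 : ℝ) ^ (n + 1) / ((n : ℝ) + 1) ^ 2)

-- Summation by parts against the Wilf–Zeilberger telescoping of `aperySum_succ_sub`.
theorem mainTerm_eq (n : ℕ) :
    mainTerm n = -2 * (aperySum (n + 1) * A 2 (n + 1) - aperySum n * A 2 n)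
      + 9 * (1 / (((n : ℝ) + 1) ^ 5 * (n + 1).centralBinom))
      + 2 * (altInvSq n * aperySum (n + 1))
      - 4 * (1 / ((n : ℝ) + 1) ^ 3 * (A 2 (n + 1) - altInvSq n / 2))
      + 2 * ((-1 : ℝ) ^ (n + 1) / ((n : ℝ) + 1) ^ 5) := by
  have hW := aperySum_succ_sub n
  have hcube : 1 / ((n : ℝ) + 1) ^ 3 * altInvSq n = (-1) ^ (n + 1) / ((n : ℝ) + 1) ^ 5 := by
    rw [altInvSq]; field_simp
  have hfive : (-1 : ℝ) ^ (n + 1) / (((n : ℝ) + 1) ^ 3 * (n + 1).centralBinom) * altInvSq n =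
      1 / (((n : ℝ) + 1) ^ 5 * (n + 1).centralBinom) := by
    rw [altInvSq, div_mul_div_comm, ← pow_add, (Even.add_self (n + 1)).neg_one_pow]
    congr 1; ring
  have hT : (-1 : ℝ) ^ (n + 1) / (((n : ℝ) + 1) ^ 3 * (n + 1).centralBinom) =
      -(aperySum (n + 1) - aperySum n + 2 * (1 / ((n : ℝ) + 1) ^ 3)) / 5 := by
    rw [hW]; ring
  have ha := A_two_succ n
  rw [mainTerm, ← altInvSq, mul_sub, hfive, ← hcube]
  rw [hT] at hfive ⊢
  linear_combination (10 : ℝ) * hfive + (2 * aperySum n) * ha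

theorem tendsto_sum_mainTerm {B : ℝ}
    (hB : HasSum (fun n : ℕ ↦ 1 / ((n : ℝ) + 1) ^ 3 * (A 2 (n + 1) - altInvSq n / 2)) B) :
    Tendsto (fun N ↦ ∑ n ∈ Finset.range N, mainTerm n) atTop
      (𝓝 (9 * centralBinomFive - 2 * aperyDouble - 4 * B - 15 / 8 * zeta 5)) := by
  have hboundary : Tendsto (fun N ↦ aperySum N * A 2 N) atTop (𝓝 0) := by
    have hA : Tendsto (A 2) atTop (𝓝 (-(1 - 2 / 2 ^ 2) * zeta 2)) :=
      (hasSum_alternating_zeta le_rfl).tendsto_sum_nat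
    simpa only [zero_mul] using tendsto_aperySum.mul hA
  have htelescope : ∀ N, ∑ n ∈ Finset.range N,
      (aperySum (n + 1) * A 2 (n + 1) - aperySum n * A 2 n) = aperySum N * A 2 N := fun N ↦ by
    rw [Finset.sum_range_sub fun n ↦ aperySum n * A 2 n]; simp [aperySum]
  simp only [mainTerm_eq, Finset.sum_add_distrib, Finset.sum_sub_distrib, ← Finset.mul_sum]
  simp only [← Finset.sum_sub_distrib, htelescope]
  have hlim := ((((hboundary.const_mul (-2)).add
    (hasSum_centralBinomFive.tendsto_sum_nat.const_mul 9)).add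
    (hasSum_altInvSq_mul_aperySum.tendsto_sum_nat.const_mul 2)).sub
    (hB.tendsto_sum_nat.const_mul 4)).add
    ((hasSum_alternating_zeta (s := 5) (by norm_num)).tendsto_sum_nat.const_mul 2)
  simpa only [show -2 * 0 + 9 * centralBinomFive + 2 * -aperyDouble - 4 * B +
    2 * (-(1 - 2 / 2 ^ 5) * zeta 5) = 9 * centralBinomFive - 2 * aperyDouble - 4 * B -
      15 / 8 * zeta 5 by ring] using hlim

section DilateSum

/-- The series `∑ f(2nx) / nˢ`; for `f = sin` and `f = cos` these are the Clausen functions, with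
the argument halved so that they match `log (2 sin x)`. -/
noncomputable def dilateSum (f : ℝ → ℝ) (s : ℕ) (x : ℝ) : ℝ :=
  ∑' n : ℕ, f (2 * ((n : ℝ) + 1) * x) / ((n : ℝ) + 1) ^ s

variable {f f' : ℝ → ℝ} {s : ℕ}

theorem norm_dilateSum_term_le (hf : ∀ x, |f x| ≤ 1) (s n : ℕ) (x : ℝ) :
    ‖f (2 * ((n : ℝ) + 1) * x) / ((n : ℝ) + 1) ^ s‖ ≤ 1 / ((n : ℝ) + 1) ^ s := by
  rw [norm_div, norm_of_nonneg (by positivity : (0 : ℝ) ≤ ((n : ℝ) + 1) ^ s)]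
  gcongr
  exact hf _

theorem hasSum_dilateSum (hf : ∀ x, |f x| ≤ 1) (hs : 2 ≤ s) (x : ℝ) :
    HasSum (fun n : ℕ ↦ f (2 * ((n : ℝ) + 1) * x) / ((n : ℝ) + 1) ^ s) (dilateSum f s x) :=
  (Summable.of_norm_bounded (summable_one_div_succ_pow hs)
    fun n ↦ norm_dilateSum_term_le hf s n x).hasSum

theorem continuous_dilateSum (hf : ∀ x, |f x| ≤ 1) (hfc : Continuous f) (hs : 2 ≤ s) :
    Continuous (dilateSum f s) :=
  continuous_tsum
    (f := fun (n : ℕ) (x : ℝ) ↦ f (2 * ((n : ℝ) + 1) * x) / ((n : ℝ) + 1) ^ s)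
    (fun n ↦ by fun_prop) (summable_one_div_succ_pow hs)
    fun n x ↦ norm_dilateSum_term_le hf s n x

theorem hasDerivAt_dilateSum (hf : ∀ x, |f x| ≤ 1) (hf' : ∀ x, |f' x| ≤ 1)
    (hd : ∀ x, HasDerivAt f (f' x) x) (hs : 2 ≤ s) (x : ℝ) :
    HasDerivAt (dilateSum f (s + 1)) (2 * dilateSum f' s x) x := by
  rw [dilateSum, ← tsum_mul_left]
  refine hasDerivAt_tsum
    (g := fun (n : ℕ) (x : ℝ) ↦ f (2 * ((n : ℝ) + 1) * x) / ((n : ℝ) + 1) ^ (s + 1))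
    (g' := fun (n : ℕ) (x : ℝ) ↦ 2 * (f' (2 * ((n : ℝ) + 1) * x) / ((n : ℝ) + 1) ^ s))
    ((summable_one_div_succ_pow hs).mul_left 2) (fun n y ↦ ?_)
    (fun n y ↦ ?_) (hasSum_dilateSum hf (by lia : 2 ≤ s + 1) 0).summable x
  · have h := ((hd (2 * ((n : ℝ) + 1) * y)).comp y
      ((hasDerivAt_id y).const_mul (2 * ((n : ℝ) + 1)))).div_const (((n : ℝ) + 1) ^ (s + 1))
    refine h.congr_deriv ?_
    rw [pow_succ]
    field_simp
  · rw [norm_mul, norm_of_nonneg zero_le_two]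
    gcongr
    exact norm_dilateSum_term_le hf' s n y

end DilateSum

section ClausenFunctions

variable {s : ℕ}

theorem hasDerivAt_dilateSum_sin (hs : 2 ≤ s) (x : ℝ) :
    HasDerivAt (dilateSum sin (s + 1)) (2 * dilateSum cos s x) x :=
  hasDerivAt_dilateSum abs_sin_le_one abs_cos_le_one hasDerivAt_sin hs x

theorem hasDerivAt_dilateSum_cos (hs : 2 ≤ s) (x : ℝ) :
    HasDerivAt (dilateSum cos (s + 1)) (-2 * dilateSum sin s x) x := by
  refine (hasDerivAt_dilateSum abs_cos_le_one (fun x ↦ (abs_neg _).trans_le (abs_sin_le_one x))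
    hasDerivAt_cos hs x).congr_deriv ?_
  simp only [dilateSum, neg_div, tsum_neg, mul_neg, neg_mul]

@[fun_prop]
theorem continuous_dilateSum_sin (hs : 2 ≤ s) : Continuous (dilateSum sin s) :=
  continuous_dilateSum abs_sin_le_one continuous_sin hs

@[fun_prop]
theorem continuous_dilateSum_cos (hs : 2 ≤ s) : Continuous (dilateSum cos s) :=
  continuous_dilateSum abs_cos_le_one continuous_cos hs

end ClausenFunctions

/-- The log-sine kernel `log (2 sin x)`. -/
noncomputable def logTwoSin (x : ℝ) : ℝ := log (2 * sin x)

theorem intervalIntegrable_logTwoSin (a b : ℝ) : IntervalIntegrable logTwoSin volume a b :=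
  MeromorphicOn.intervalIntegrable_log fun _ _ ↦ by fun_prop

theorem measurable_logTwoSin : Measurable logTwoSin := by unfold logTwoSin; fun_prop

theorem continuousAt_logTwoSin {x : ℝ} (hx : sin x ≠ 0) : ContinuousAt logTwoSin x :=
  ContinuousAt.log (by fun_prop) (mul_ne_zero two_ne_zero hx)

theorem ae_sin_ne_zero : ∀ᵐ x : ℝ, sin x ≠ 0 := by
  have : {x : ℝ | sin x = 0} = Set.range fun n : ℤ ↦ (n : ℝ) * π := by
    ext x; simp [sin_eq_zero_iff]
  simp only [ne_eq, ae_iff, not_not, this]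
  exact (Set.countable_range _).measure_zero _

section AbelSummation

/-- The squared modulus of `1 - r e^{2ix}`, the denominator of the Poisson kernel. -/
noncomputable def poissonDenom (r x : ℝ) : ℝ := (1 - r) ^ 2 + 4 * r * sin x ^ 2

variable {r x : ℝ}

theorem norm_one_sub_mul_exp_sq (r x : ℝ) :
    ‖1 - r * Complex.exp ((2 * x : ℝ) * Complex.I)‖ ^ 2 = poissonDenom r x := by
  rw [← Complex.normSq_eq_norm_sq, Complex.normSq_apply]
  simp only [Complex.sub_re, Complex.sub_im, Complex.one_re, Complex.one_im,
    Complex.re_ofReal_mul, Complex.im_ofReal_mul, Complex.exp_ofReal_mul_I_re,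
    Complex.exp_ofReal_mul_I_im, poissonDenom, cos_two_mul, sin_two_mul]
  linear_combination (4 * r ^ 2 * cos x ^ 2 - 4 * r) * sin_sq_add_cos_sq x

theorem hasSum_log_poissonDenom (hr₀ : 0 ≤ r) (hr₁ : r < 1) (x : ℝ) :
    HasSum (fun n : ℕ ↦ r ^ (n + 1) * cos (2 * ((n : ℝ) + 1) * x) / ((n : ℝ) + 1))
      (-(1 / 2 * log (poissonDenom r x))) := by
  set z : ℂ := r * Complex.exp ((2 * x : ℝ) * Complex.I) with hz
  have hz_norm : ‖z‖ < 1 := by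
    rwa [hz, norm_mul, Complex.norm_exp_ofReal_mul_I, mul_one, Complex.norm_real,
      norm_of_nonneg hr₀]
  have hz_pow (n : ℕ) : z ^ (n + 1) =
      (r ^ (n + 1) : ℝ) * Complex.exp ((2 * ((n : ℝ) + 1) * x : ℝ) * Complex.I) := by
    rw [hz, mul_pow, ← Complex.exp_nat_mul]
    push_cast
    congr 2; ring
  have h := Complex.hasSum_re ((hasSum_nat_add_iff' 1).mpr
    (Complex.hasSum_taylorSeries_neg_log hz_norm))
  convert h using 1
  · ext n
    rw [hz_pow, show ((n + 1 : ℕ) : ℂ) = ((n + 1 : ℝ) : ℂ) by push_cast; rfl,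
      Complex.div_ofReal_re, Complex.re_ofReal_mul, Complex.exp_ofReal_mul_I_re]
  · rw [← norm_one_sub_mul_exp_sq, ← hz, log_pow]
    simp [Complex.log_re]

theorem sq_sin_le_poissonDenom (hr : 1 / 4 ≤ r) : sin x ^ 2 ≤ poissonDenom r x := by
  unfold poissonDenom; nlinarith [sq_nonneg (1 - r), sq_nonneg (sin x)]

theorem poissonDenom_le (hr₀ : 0 ≤ r) (hr₁ : r ≤ 1) : poissonDenom r x ≤ 2 ^ 2 := by
  unfold poissonDenom; nlinarith [sin_sq_le_one x]

theorem abs_half_log_poissonDenom_le (hr : 1 / 4 ≤ r) (hr₁ : r ≤ 1) (hx : sin x ≠ 0) :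
    |1 / 2 * log (poissonDenom r x)| ≤ log 2 + |log (sin x)| := by
  have hpos : 0 < sin x ^ 2 := by positivity
  have lower := log_le_log hpos (sq_sin_le_poissonDenom hr)
  have upper := log_le_log (hpos.trans_le (sq_sin_le_poissonDenom hr))
    (poissonDenom_le (x := x) (by linarith) hr₁)
  have := log_nonneg one_le_two
  rw [log_pow, Nat.cast_ofNat] at lower upper
  rw [abs_le]
  constructor <;> linarith [neg_abs_le (log (sin x)), abs_nonneg (log (sin x))]

theorem eventually_mem_Ioo_left_one : ∀ᶠ r : ℝ in 𝓝[<] 1, 1 / 4 < r ∧ r < 1 := by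
  have h : ∀ᶠ r : ℝ in 𝓝[<] 1, 1 / 4 < r :=
    nhdsWithin_le_nhds (eventually_gt_nhds (by norm_num))
  exact h.and self_mem_nhdsWithin

theorem tendsto_integral_log_poissonDenom (x : ℝ) :
    Tendsto (fun r ↦ ∫ t in (0 : ℝ)..x, 1 / 2 * log (poissonDenom r t)) (𝓝[<] 1)
      (𝓝 (∫ t in (0 : ℝ)..x, logTwoSin t)) := by
  refine intervalIntegral.tendsto_integral_filter_of_dominated_convergence
    (fun t ↦ log 2 + |log (sin t)|) (.of_forall fun r ↦ ?_) ?_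
    (intervalIntegrable_const.add intervalIntegrable_log_sin.abs) ?_
  · exact Measurable.aestronglyMeasurable (by unfold poissonDenom; fun_prop)
  · filter_upwards [eventually_mem_Ioo_left_one] with r ⟨hr, hr₁⟩
    filter_upwards [ae_sin_ne_zero] with t ht _
    exact abs_half_log_poissonDenom_le hr.le hr₁.le ht
  · filter_upwards [ae_sin_ne_zero] with t ht _
    have hone : poissonDenom 1 t = (2 * sin t) ^ 2 := by unfold poissonDenom; ring
    have hcont : ContinuousAt (fun r ↦ 1 / 2 * log (poissonDenom r t)) 1 := by
      refine (ContinuousAt.log (by unfold poissonDenom; fun_prop) ?_).const_mul _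
      rw [hone]; positivity
    have hval : 1 / 2 * log (poissonDenom 1 t) = logTwoSin t := by
      rw [hone, log_pow, logTwoSin]; push_cast; ring
    simpa only [hval] using hcont.tendsto.mono_left nhdsWithin_le_nhds

theorem hasSum_integral_log_poissonDenom (hr₀ : 0 ≤ r) (hr₁ : r < 1) (x : ℝ) :
    HasSum (fun n : ℕ ↦ -(1 / 2) * (r ^ (n + 1) *
        (sin (2 * ((n : ℝ) + 1) * x) / ((n : ℝ) + 1) ^ 2)))
      (∫ t in (0 : ℝ)..x, 1 / 2 * log (poissonDenom r t)) := by
  have h := intervalIntegral.hasSum_integral_of_dominated_convergence (μ := volume)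
    (a := 0) (b := x)
    (F := fun (n : ℕ) t ↦ -(r ^ (n + 1) * cos (2 * ((n : ℝ) + 1) * t) / ((n : ℝ) + 1)))
    (f := fun t ↦ 1 / 2 * log (poissonDenom r t)) (fun n _ ↦ r ^ (n + 1))
    (fun n ↦ Continuous.aestronglyMeasurable (by fun_prop)) (fun n ↦ ae_of_all _ fun t _ ↦ ?_)
    (ae_of_all _ fun t _ ↦ (summable_nat_add_iff 1).mpr (summable_geometric_of_lt_one hr₀ hr₁))
    (by simp) (ae_of_all _ fun t _ ↦ by simpa using (hasSum_log_poissonDenom hr₀ hr₁ t).neg)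
  · refine h.congr_fun fun n ↦ ?_
    rw [intervalIntegral.integral_neg, intervalIntegral.integral_div,
      intervalIntegral.integral_const_mul, intervalIntegral.integral_comp_mul_left (f := cos)
        (by positivity : 2 * ((n : ℝ) + 1) ≠ 0), integral_cos]
    simp
    field_simp
  · rw [norm_neg, norm_div, norm_mul, norm_of_nonneg (by positivity : 0 ≤ r ^ (n + 1)),
      norm_of_nonneg (by positivity : (0 : ℝ) ≤ (n : ℝ) + 1), mul_div_assoc]
    refine mul_le_of_le_one_right (by positivity) (div_le_one_of_le₀ ?_ (by positivity))
    exact (abs_cos_le_one _).trans (by simp)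

theorem tendsto_tsum_pow_mul_sin (x : ℝ) :
    Tendsto (fun r : ℝ ↦ ∑' n : ℕ, -(1 / 2) * (r ^ (n + 1) *
        (sin (2 * ((n : ℝ) + 1) * x) / ((n : ℝ) + 1) ^ 2))) (𝓝[<] 1)
      (𝓝 (-(1 / 2) * dilateSum sin 2 x)) := by
  rw [dilateSum, ← tsum_mul_left]
  refine tendsto_tsum_of_dominated_convergence (bound := fun n : ℕ ↦ 1 / ((n : ℝ) + 1) ^ 2)
    (summable_one_div_succ_pow le_rfl) (fun n ↦ ?_) ?_
  · have : ContinuousAt (fun r : ℝ ↦ -(1 / 2) * (r ^ (n + 1) *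
        (sin (2 * ((n : ℝ) + 1) * x) / ((n : ℝ) + 1) ^ 2))) 1 := by fun_prop
    simpa only [one_pow, one_mul] using this.tendsto.mono_left nhdsWithin_le_nhds
  · filter_upwards [eventually_mem_Ioo_left_one] with r ⟨hr, hr₁⟩ n
    rw [norm_mul, norm_mul, norm_pow, norm_of_nonneg (by linarith : 0 ≤ r)]
    calc ‖(-(1 / 2) : ℝ)‖ * (r ^ (n + 1) * ‖sin (2 * ((n : ℝ) + 1) * x) / ((n : ℝ) + 1) ^ 2‖)
        ≤ 1 * (1 * (1 / ((n : ℝ) + 1) ^ 2)) := by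
          gcongr
          · norm_num
          · exact pow_le_one₀ (by linarith) hr₁.le
          · exact norm_dilateSum_term_le abs_sin_le_one 2 n x
      _ = _ := by ring

theorem integral_logTwoSin (x : ℝ) :
    ∫ t in (0 : ℝ)..x, logTwoSin t = -(1 / 2) * dilateSum sin 2 x := by
  refine tendsto_nhds_unique (tendsto_integral_log_poissonDenom x)
    ((tendsto_tsum_pow_mul_sin x).congr' ?_)
  filter_upwards [eventually_mem_Ioo_left_one] with r ⟨hr, hr₁⟩
  exact (hasSum_integral_log_poissonDenom (by linarith) hr₁ x).tsum_eq

theorem hasDerivAt_dilateSum_sin_two (hx : sin x ≠ 0) :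
    HasDerivAt (dilateSum sin 2) (-2 * logTwoSin x) x := by
  have h := (intervalIntegral.integral_hasDerivAt_right (intervalIntegrable_logTwoSin 0 x)
    measurable_logTwoSin.stronglyMeasurable.stronglyMeasurableAtFilter
    (continuousAt_logTwoSin hx)).const_mul (-2)
  refine h.congr_of_eventuallyEq (.of_forall fun y ↦ ?_)
  simp only [integral_logTwoSin]
  ring

end AbelSummation

section LogSineIntegrals

/-- A primitive of `p(x) log (2 sin x)` for a polynomial `p` of degree at most `4`, obtained by
repeated integration by parts. -/
noncomputable def logSinePrimitive (p : ℝ[X]) (x : ℝ) : ℝ :=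
  -(p.eval x * dilateSum sin 2 x / 2 + (derivative p).eval x * dilateSum cos 3 x / 4
    - (derivative^[2] p).eval x * dilateSum sin 4 x / 8
    - (derivative^[3] p).eval x * dilateSum cos 5 x / 16
    + (derivative^[4] p).eval x * dilateSum sin 6 x / 32)

variable {p : ℝ[X]} {a b x : ℝ}

theorem continuous_logSinePrimitive (p : ℝ[X]) : Continuous (logSinePrimitive p) := by
  unfold logSinePrimitive
  fun_prop (disch := norm_num)

theorem hasDerivAt_logSinePrimitive (hp : p.natDegree ≤ 4) (hx : sin x ≠ 0) :
    HasDerivAt (logSinePrimitive p) (p.eval x * logTwoSin x) x := by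
  have hp₅ : derivative (derivative^[4] p) = 0 := by
    rw [← Function.iterate_succ_apply' derivative]
    exact iterate_derivative_eq_zero (by lia)
  have hp' (k : ℕ) : HasDerivAt (fun x ↦ (derivative^[k] p).eval x)
      ((derivative^[k + 1] p).eval x) x := by
    rw [Function.iterate_succ_apply' derivative]
    exact (derivative^[k] p).hasDerivAt x
  have h := (((((((hp' 0).mul (hasDerivAt_dilateSum_sin_two hx)).div_const 2).add
    (((hp' 1).mul (hasDerivAt_dilateSum_cos (s := 2) (by norm_num) x)).div_const 4)).sub
    (((hp' 2).mul (hasDerivAt_dilateSum_sin (s := 3) (by norm_num) x)).div_const 8)).sub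
    (((hp' 3).mul (hasDerivAt_dilateSum_cos (s := 4) (by norm_num) x)).div_const 16)).add
    (((hp' 4).mul (hasDerivAt_dilateSum_sin (s := 5) (by norm_num) x)).div_const 32)).neg
  refine h.congr_deriv ?_
  simp only [Function.iterate_succ_apply' derivative 4, hp₅, eval_zero, Function.iterate_zero,
    id_eq]
  ring_nf

theorem integral_eval_mul_logTwoSin (hp : p.natDegree ≤ 4) (ha : 0 ≤ a) (hab : a ≤ b)
    (hb : b ≤ π) :
    ∫ x in a..b, p.eval x * logTwoSin x = logSinePrimitive p b - logSinePrimitive p a :=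
  intervalIntegral.integral_eq_sub_of_hasDerivAt_of_le hab
    (continuous_logSinePrimitive p).continuousOn
    (fun x hx ↦ hasDerivAt_logSinePrimitive hp
      (sin_pos_of_pos_of_lt_pi (ha.trans_lt hx.1) (hx.2.trans_le hb)).ne')
    ((intervalIntegrable_logTwoSin a b).continuousOn_mul (by fun_prop))

end LogSineIntegrals

section DistributionRelation

theorem sum_cos_add_mul_pi_div {m : ℕ} (hm : m ≠ 0) (n : ℕ) (x : ℝ) :
    ∑ j ∈ Finset.range m, cos (2 * n * (x + j * (π / m))) =
      if m ∣ n then m * cos (2 * n * x) else 0 := by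
  set ζ : ℂ := Complex.exp (2 * π * Complex.I / m) with hζ
  have hprim : IsPrimitiveRoot ζ m := Complex.isPrimitiveRoot_exp m hm
  have hterm (j : ℕ) : cos (2 * n * (x + j * (π / m))) =
      (Complex.exp ((2 * n * x : ℝ) * Complex.I) * (ζ ^ n) ^ j).re := by
    rw [hζ, ← Complex.exp_nat_mul, ← Complex.exp_nat_mul, ← Complex.exp_add,
      ← Complex.exp_ofReal_mul_I_re]
    congr 2
    push_cast
    field_simp
  simp only [hterm, ← Complex.re_sum, ← Finset.mul_sum]
  split_ifs with h
  · rw [(hprim.pow_eq_one_iff_dvd n).mpr h]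
    simp only [one_pow, mul_one, Finset.sum_const, Finset.card_range, nsmul_eq_mul,
      ← Complex.ofReal_natCast]
    rw [Complex.re_mul_ofReal, Complex.exp_ofReal_mul_I_re, mul_comm]
  · rw [geom_sum_eq (mt (hprim.pow_eq_one_iff_dvd n).mp h), ← pow_mul, mul_comm n, pow_mul,
      hprim.pow_eq_one]
    simp

theorem sum_dilateSum_cos_add {m s : ℕ} (hm : m ≠ 0) (hs : 2 ≤ s) (x : ℝ) :
    ∑ j ∈ Finset.range m, dilateSum cos s (x + j * (π / m)) =
      m / m ^ s * dilateSum cos s (m * x) := by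
  have hinj : Function.Injective fun k : ℕ ↦ m * k + (m - 1) := fun a b h ↦ by
    simpa [hm] using h
  have hsum := hasSum_sum fun j (_ : j ∈ Finset.range m) ↦
    hasSum_dilateSum abs_cos_le_one hs (x + j * (π / m))
  have hterm (n : ℕ) : ∑ j ∈ Finset.range m,
      cos (2 * ((n : ℝ) + 1) * (x + j * (π / m))) / ((n : ℝ) + 1) ^ s =
      (if m ∣ n + 1 then m * cos (2 * ((n : ℝ) + 1) * x) else 0) / ((n : ℝ) + 1) ^ s := by
    rw [← Finset.sum_div]
    exact_mod_cast congrArg (· / ((n : ℝ) + 1) ^ s) (sum_cos_add_mul_pi_div hm (n + 1) x)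
  simp only [hterm] at hsum
  rw [← hinj.hasSum_iff] at hsum
  · refine hsum.unique (((hasSum_dilateSum abs_cos_le_one hs (m * x)).mul_left _).congr_fun
      fun k ↦ ?_)
    have hk : m * k + (m - 1) + 1 = m * (k + 1) := by
      rw [mul_add_one]; lia
    have hk' : ((m * k + (m - 1) : ℕ) : ℝ) + 1 = m * (k + 1) := by exact_mod_cast hk
    rw [Function.comp_apply, hk, hk', if_pos (dvd_mul_right _ _), mul_pow]
    ring_nf
  · rintro n hn
    rw [if_neg, zero_div]
    rintro ⟨c, hc⟩
    obtain ⟨k, rfl⟩ : ∃ k, c = k + 1 := Nat.exists_eq_succ_of_ne_zero (by rintro rfl; simp at hc)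
    exact hn ⟨k, by simp only; rw [mul_add_one] at hc; lia⟩

end DistributionRelation

section SpecialValues

variable {s : ℕ}

theorem dilateSum_cos_zero (s : ℕ) : dilateSum cos s 0 = zeta s := by simp [dilateSum, zeta]

theorem dilateSum_sin_zero (s : ℕ) : dilateSum sin s 0 = 0 := by simp [dilateSum]

theorem dilateSum_cos_pi_sub (s : ℕ) (x : ℝ) : dilateSum cos s (π - x) = dilateSum cos s x := by
  unfold dilateSum
  congr! 3 with n
  rw [← cos_nat_mul_two_pi_sub _ (n + 1)]
  congr 1
  push_cast
  ring

theorem dilateSum_sin_pi_div_two (s : ℕ) : dilateSum sin s (π / 2) = 0 := by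
  have (n : ℕ) : sin (2 * ((n : ℝ) + 1) * (π / 2)) = 0 := by
    rw [show 2 * ((n : ℝ) + 1) * (π / 2) = (n + 1 : ℕ) * π by push_cast; ring, sin_nat_mul_pi]
  simp [dilateSum, this]

theorem dilateSum_cos_add_dilateSum_cos_add_pi_div_two (hs : 2 ≤ s) (x : ℝ) :
    dilateSum cos s x + dilateSum cos s (x + π / 2) = 2 / 2 ^ s * dilateSum cos s (2 * x) := by
  simpa [Finset.sum_range_succ] using sum_dilateSum_cos_add two_ne_zero hs x

theorem dilateSum_cos_pi_div_two (hs : 2 ≤ s) :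
    dilateSum cos s (π / 2) = (2 / 2 ^ s - 1) * zeta s := by
  have h := dilateSum_cos_add_dilateSum_cos_add_pi_div_two hs 0
  rw [zero_add, mul_zero, dilateSum_cos_zero] at h
  linear_combination h

theorem dilateSum_cos_pi_div_three (hs : 2 ≤ s) :
    dilateSum cos s (π / 3) = (3 / 3 ^ s - 1) / 2 * zeta s := by
  have h := sum_dilateSum_cos_add three_ne_zero hs 0
  simp only [Finset.sum_range_succ, Finset.range_zero, Finset.sum_empty, zero_add, mul_zero,
    Nat.cast_zero, zero_mul, Nat.cast_one, one_mul, Nat.cast_ofNat, dilateSum_cos_zero,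
    show 2 * (π / 3) = π - π / 3 by ring, dilateSum_cos_pi_sub] at h
  linear_combination h / 2

theorem dilateSum_cos_pi_div_four (hs : 2 ≤ s) :
    dilateSum cos s (π / 4) = (2 / 2 ^ s - 1) / 2 ^ s * zeta s := by
  have h := dilateSum_cos_add_dilateSum_cos_add_pi_div_two hs (π / 4)
  rw [show π / 4 + π / 2 = π - π / 4 by ring, dilateSum_cos_pi_sub,
    show 2 * (π / 4) = π / 2 by ring, dilateSum_cos_pi_div_two hs] at h
  linear_combination h / 2

theorem dilateSum_cos_pi_div_six (hs : 2 ≤ s) :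
    dilateSum cos s (π / 6) = (2 / 2 ^ s - 1) * (3 / 3 ^ s - 1) / 2 * zeta s := by
  have h := dilateSum_cos_add_dilateSum_cos_add_pi_div_two hs (π / 6)
  rw [show π / 6 + π / 2 = π - π / 3 by ring, dilateSum_cos_pi_sub,
    show 2 * (π / 6) = π / 3 by ring, dilateSum_cos_pi_div_three hs] at h
  linear_combination h

theorem eval_map_bernoulli_three (y : ℝ) :
    ((Polynomial.bernoulli 3).map (algebraMap ℚ ℝ)).eval y = y * (y - 1 / 2) * (y - 1) := by
  simp only [Polynomial.bernoulli, Finset.sum_range_succ, Finset.sum_range_zero,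
    Polynomial.map_add, eval_add, Polynomial.map_zero, eval_zero, map_monomial, eval_monomial]
  norm_num [_root_.bernoulli, bernoulli'_two, bernoulli'_three, Nat.choose]
  ring

theorem dilateSum_sin_three {x : ℝ} (hx : x ∈ Set.Icc 0 π) :
    dilateSum sin 3 x = x * (2 * x - π) * (x - π) / 3 := by
  have hx' : x / π ∈ Set.Icc (0 : ℝ) 1 :=
    ⟨div_nonneg hx.1 pi_pos.le, div_le_one_of_le₀ hx.2 pi_pos.le⟩
  have h := (hasSum_nat_add_iff' 1).mpr (hasSum_one_div_nat_pow_mul_sin one_ne_zero hx')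
  rw [(hasSum_dilateSum abs_sin_le_one (by norm_num) x).unique (h.congr_fun fun n ↦ ?_)]
  · rw [show 2 * 1 + 1 = 3 from rfl, eval_map_bernoulli_three]
    norm_num [Nat.factorial]
    field_simp
    ring
  · have : 2 * π * ((n : ℝ) + 1) * (x / π) = 2 * ((n : ℝ) + 1) * x := by field_simp
    push_cast
    rw [this]
    ring

end SpecialValues

section CotangentIntegrals

variable {x b : ℝ}

theorem sin_eq_mul_sinc (x : ℝ) : sin x = x * sinc x := by
  rcases eq_or_ne x 0 with rfl | hx
  · simp
  · rw [sinc_of_ne_zero hx, mul_div_cancel₀ _ hx]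

theorem sinc_pos (hx₀ : 0 ≤ x) (hx : x < π) : 0 < sinc x := by
  rcases hx₀.eq_or_lt with rfl | hx₀
  · simp
  · rw [sinc_of_ne_zero hx₀.ne']
    exact div_pos (sin_pos_of_pos_of_lt_pi hx₀ hx) hx₀

theorem mul_cot_eq_cos_div_sinc (hx : x ≠ 0) : x * cot x = cos x / sinc x := by
  rw [cot_eq_cos_div_sin, sin_eq_mul_sinc]
  field_simp

theorem mul_logTwoSin (hx₀ : 0 ≤ x) (hx : x < π) :
    x * logTwoSin x = x * log x + x * log (2 * sinc x) := by
  rcases hx₀.eq_or_lt with rfl | hx₀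
  · simp
  · have := (sinc_pos hx₀.le hx).ne'
    rw [logTwoSin, sin_eq_mul_sinc, mul_left_comm, log_mul hx₀.ne' (by positivity), mul_add]

theorem continuousOn_mul_logTwoSin (hb : b < π) :
    ContinuousOn (fun x ↦ x * logTwoSin x) (Set.Icc 0 b) := by
  have hlog : ContinuousOn (fun x ↦ x * log x + x * log (2 * sinc x)) (Set.Icc 0 b) :=
    continuous_mul_log.continuousOn.add <| continuousOn_id.mul <|
      (continuous_const.mul continuous_sinc).continuousOn.log fun x hx ↦
        mul_ne_zero two_ne_zero (sinc_pos hx.1 (hx.2.trans_lt hb)).ne'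
  exact hlog.congr fun x hx ↦ mul_logTwoSin hx.1 (hx.2.trans_lt hb)

theorem hasDerivAt_logTwoSin (hx : sin x ≠ 0) : HasDerivAt logTwoSin (cot x) x := by
  refine (((hasDerivAt_sin x).const_mul 2).log (by positivity)).congr_deriv ?_
  rw [cot_eq_cos_div_sin]
  field_simp

theorem intervalIntegrable_mul_mul_cot {f : ℝ → ℝ} (hf : Continuous f) (hb₀ : 0 ≤ b) (hb : b < π) :
    IntervalIntegrable (fun x ↦ x * f x * cot x) volume 0 b := by
  have h : IntervalIntegrable (fun x ↦ f x * (cos x / sinc x)) volume 0 b :=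
    ContinuousOn.intervalIntegrable_of_Icc hb₀ <| hf.continuousOn.mul <|
      continuous_cos.continuousOn.div continuous_sinc.continuousOn
        fun x hx ↦ (sinc_pos hx.1 (hx.2.trans_lt hb)).ne'
  refine h.congr fun x hx ↦ ?_
  rw [Set.uIoc_of_le hb₀] at hx
  simp only [← mul_cot_eq_cos_div_sinc hx.1.ne']
  ring

theorem integral_eval_mul_cot {p : ℝ[X]} (hp : p.natDegree ≤ 5) (hp₀ : X ∣ p) (hb₀ : 0 ≤ b)
    (hb : b < π) :
    ∫ x in (0 : ℝ)..b, p.eval x * cot x = p.eval b * logTwoSin b -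
      (logSinePrimitive (derivative p) b - logSinePrimitive (derivative p) 0) := by
  have hp' : (derivative p).natDegree ≤ 4 := (natDegree_derivative_le p).trans (by lia)
  obtain ⟨q, rfl⟩ := hp₀
  have hcot : IntervalIntegrable (fun x ↦ (X * q).eval x * cot x) volume 0 b := by
    simpa using intervalIntegrable_mul_mul_cot q.continuous hb₀ hb
  have hlog : IntervalIntegrable (fun x ↦ (derivative (X * q)).eval x * logTwoSin x) volume 0 b :=
    (intervalIntegrable_logTwoSin 0 b).continuousOn_mul (Polynomial.continuous _).continuousOn
  have hcont : ContinuousOn (fun x ↦ (X * q).eval x * logTwoSin x) (Set.Icc 0 b) := by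
    refine ((continuousOn_mul_logTwoSin hb).mul q.continuous.continuousOn).congr fun x _ ↦ ?_
    simp only [eval_mul, eval_X, Pi.mul_apply]
    ring
  have hparts := intervalIntegral.integral_eq_sub_of_hasDerivAt_of_le hb₀ hcont (fun x hx ↦
    ((X * q).hasDerivAt x).mul
      (hasDerivAt_logTwoSin (sin_pos_of_pos_of_lt_pi hx.1 (hx.2.trans hb)).ne')) (hlog.add hcot)
  rw [intervalIntegral.integral_add hlog hcot, integral_eval_mul_logTwoSin hp' le_rfl hb₀ hb.le]
    at hparts
  simp only [eval_mul, eval_X, zero_mul, sub_zero] at hparts ⊢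
  linear_combination hparts

end CotangentIntegrals

section EulerSum

/-- The square, normalised to have mean zero on `[0, π / 2]`. Its cosine coefficients there are
proportional to `(-1) ^ n / n ^ 2`. -/
noncomputable def centeredSq (x : ℝ) : ℝ := x ^ 2 - π ^ 2 / 12

@[fun_prop]
theorem continuous_centeredSq : Continuous centeredSq := by unfold centeredSq; fun_prop

theorem integral_centeredSq : ∫ x in (0 : ℝ)..π / 2, centeredSq x = 0 := by
  unfold centeredSq
  rw [intervalIntegral.integral_sub (Continuous.intervalIntegrable (by fun_prop) _ _)
    (Continuous.intervalIntegrable (by fun_prop) _ _), integral_pow,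
    intervalIntegral.integral_const, smul_eq_mul]
  ring

theorem integral_centeredSq_mul_cos (n : ℕ) :
    ∫ x in (0 : ℝ)..π / 2, centeredSq x * cos (2 * ((n : ℝ) + 1) * x) = π / 4 * altInvSq n := by
  set a : ℝ := 2 * ((n : ℝ) + 1) with ha
  have ha₀ : a ≠ 0 := by positivity
  have hend : a * (π / 2) = (n + 1 : ℕ) * π := by rw [ha]; push_cast; ring
  have hderiv (x : ℝ) : HasDerivAt (fun x ↦ centeredSq x * (sin (a * x) / a) +
      2 * x * (cos (a * x) / a ^ 2) - 2 * (sin (a * x) / a ^ 3))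
      (centeredSq x * cos (a * x)) x := by
    have hsq : HasDerivAt centeredSq (2 * x) x :=
      ((hasDerivAt_pow 2 x).sub_const (π ^ 2 / 12)).congr_deriv (by norm_num)
    have hlin : HasDerivAt (fun x ↦ a * x) a x := by simpa using (hasDerivAt_id x).const_mul a
    have h := ((hsq.mul (hlin.sin.div_const a)).add
      (((hasDerivAt_id x).const_mul 2).mul (hlin.cos.div_const (a ^ 2)))).sub
        ((hlin.sin.div_const (a ^ 3)).const_mul 2)
    refine h.congr_deriv ?_
    simp only [id_eq]
    field_simp
    ring
  rw [intervalIntegral.integral_eq_sub_of_hasDerivAt (fun x _ ↦ hderiv x)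
    (Continuous.intervalIntegrable (by fun_prop) _ _), hend, sin_nat_mul_pi, cos_nat_mul_pi,
    altInvSq, ha]
  simp only [mul_zero, sin_zero, zero_div, add_zero, sub_zero, zero_mul, zero_add]
  field_simp
  ring

theorem cot_mul_sin_add_sub_sin {x : ℝ} (hx : sin x ≠ 0) (a : ℝ) :
    cot x * (sin (a + 2 * x) - sin a) = cos a + cos (a + 2 * x) := by
  rw [sin_sub_sin, cos_add_cos, cot_eq_cos_div_sin, show (a + 2 * x - a) / 2 = x by ring,
    show (a - (a + 2 * x)) / 2 = -x by ring, cos_neg, add_comm a (a + 2 * x)]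
  field_simp

theorem cot_mul_sin_two_mul {x : ℝ} (hx : sin x ≠ 0) (k : ℕ) :
    cot x * sin (2 * ((k : ℝ) + 1) * x) =
      1 + 2 * ∑ n ∈ Finset.range k, cos (2 * ((n : ℝ) + 1) * x) + cos (2 * ((k : ℝ) + 1) * x) := by
  induction k with
  | zero => simpa using cot_mul_sin_add_sub_sin hx 0
  | succ k ih =>
    have h := cot_mul_sin_add_sub_sin hx (2 * ((k : ℝ) + 1) * x)
    rw [show 2 * ((k : ℝ) + 1) * x + 2 * x = 2 * (((k + 1 : ℕ) : ℝ) + 1) * x by push_cast; ring]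
      at h
    rw [Finset.sum_range_succ]
    linear_combination h + ih

theorem A_two_succ_sub_half_altInvSq (k : ℕ) :
    A 2 (k + 1) - altInvSq k / 2 = 2 / π * ∫ x in (0 : ℝ)..π / 2,
      centeredSq x * (cot x * sin (2 * ((k : ℝ) + 1) * x)) := by
  have hA : A 2 (k + 1) = ∑ n ∈ Finset.range (k + 1), altInvSq n := rfl
  have hexpand : ∫ x in (0 : ℝ)..π / 2, centeredSq x * (cot x * sin (2 * ((k : ℝ) + 1) * x)) =
      ∫ x in (0 : ℝ)..π / 2, (centeredSq x
        + 2 * ∑ n ∈ Finset.range k, centeredSq x * cos (2 * ((n : ℝ) + 1) * x)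
        + centeredSq x * cos (2 * ((k : ℝ) + 1) * x)) := by
    refine intervalIntegral.integral_congr_ae ?_
    filter_upwards [ae_sin_ne_zero] with x hx _
    rw [cot_mul_sin_two_mul hx, ← Finset.mul_sum]
    ring
  rw [hexpand, intervalIntegral.integral_add, intervalIntegral.integral_add,
    intervalIntegral.integral_const_mul, intervalIntegral.integral_finsetSum, integral_centeredSq]
  · simp only [integral_centeredSq_mul_cos, hA, Finset.sum_range_succ, ← Finset.mul_sum]
    field_simp
    ring
  all_goals first | intro _ _ | skip
  all_goals exact Continuous.intervalIntegrable (by fun_prop) _ _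

theorem abs_sin_nat_mul_le (k : ℕ) (x : ℝ) : |sin (k * x)| ≤ k * |sin x| := by
  induction k with
  | zero => simp
  | succ k ih =>
    calc |sin ((k + 1 : ℕ) * x)| = |sin (k * x) * cos x + cos (k * x) * sin x| := by
          rw [← sin_add]; push_cast; ring_nf
      _ ≤ |sin (k * x)| * |cos x| + |cos (k * x)| * |sin x| := by
          simpa only [abs_mul] using abs_add_le (sin (k * x) * cos x) (cos (k * x) * sin x)
      _ ≤ k * |sin x| * 1 + 1 * |sin x| := by
          gcongr <;> exact abs_cos_le_one _
      _ = (k + 1 : ℕ) * |sin x| := by push_cast; ring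

theorem abs_cot_mul_sin_two_mul_le {x : ℝ} (hx : sin x ≠ 0) (k : ℕ) :
    |cot x * sin (2 * ((k : ℝ) + 1) * x)| ≤ 2 * ((k : ℝ) + 1) := by
  have h := abs_sin_nat_mul_le (2 * (k + 1)) x
  push_cast at h
  rw [abs_mul, cot_eq_cos_div_sin, abs_div]
  calc |cos x| / |sin x| * |sin (2 * ((k : ℝ) + 1) * x)|
      ≤ 1 / |sin x| * (2 * ((k : ℝ) + 1) * |sin x|) := by gcongr; exact abs_cos_le_one x
    _ = 2 * ((k : ℝ) + 1) := by field_simp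

theorem abs_centeredSq_le {x : ℝ} (hx : x ∈ Set.Icc 0 (π / 2)) : |centeredSq x| ≤ π ^ 2 := by
  rw [centeredSq, abs_le]
  constructor <;> nlinarith [hx.1, hx.2, pi_pos]

theorem hasSum_integral_centeredSq_mul_cot :
    HasSum (fun k : ℕ ↦ 1 / ((k : ℝ) + 1) ^ 3 * (A 2 (k + 1) - altInvSq k / 2))
      (2 / π * ∫ x in (0 : ℝ)..π / 2, centeredSq x * (cot x * dilateSum sin 3 x)) := by
  have hmeas : Measurable cot := by
    simp only [funext cot_eq_cos_div_sin]; fun_prop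
  have h := intervalIntegral.hasSum_integral_of_dominated_convergence (μ := volume)
    (a := 0) (b := π / 2)
    (F := fun (k : ℕ) x ↦
      1 / ((k : ℝ) + 1) ^ 3 * (centeredSq x * (cot x * sin (2 * ((k : ℝ) + 1) * x))))
    (f := fun x ↦ centeredSq x * (cot x * dilateSum sin 3 x))
    (fun (k : ℕ) _ ↦ π ^ 2 * 2 * (1 / ((k : ℝ) + 1) ^ 2))
    (fun k ↦ Measurable.aestronglyMeasurable (by fun_prop)) (fun k ↦ ?_)
    (ae_of_all _ fun t _ ↦ (summable_one_div_succ_pow le_rfl).mul_left _) (by simp)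
    (ae_of_all _ fun x _ ↦ ?_)
  · refine (h.mul_left (2 / π)).congr_fun fun k ↦ ?_
    rw [intervalIntegral.integral_const_mul, A_two_succ_sub_half_altInvSq]
    ring
  · filter_upwards [ae_sin_ne_zero] with x hsin hx
    rw [Set.uIoc_of_le (by positivity)] at hx
    rw [norm_mul, norm_mul, norm_of_nonneg (by positivity : 0 ≤ 1 / ((k : ℝ) + 1) ^ 3)]
    calc 1 / ((k : ℝ) + 1) ^ 3 * (‖centeredSq x‖ * ‖cot x * sin (2 * ((k : ℝ) + 1) * x)‖)
        ≤ 1 / ((k : ℝ) + 1) ^ 3 * (π ^ 2 * (2 * ((k : ℝ) + 1))) := by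
          gcongr
          exacts [abs_centeredSq_le ⟨hx.1.le, hx.2⟩, abs_cot_mul_sin_two_mul_le hsin k]
      _ = π ^ 2 * 2 * (1 / ((k : ℝ) + 1) ^ 2) := by field_simp
  · have hsum := (hasSum_dilateSum abs_sin_le_one (by norm_num : 2 ≤ 3) x).mul_left
      (centeredSq x * cot x)
    rw [mul_assoc] at hsum
    exact hsum.congr_fun fun k ↦ by ring

theorem hasSum_eulerSum :
    HasSum (fun k : ℕ ↦ 1 / ((k : ℝ) + 1) ^ 3 * (A 2 (k + 1) - altInvSq k / 2))
      (π ^ 2 * zeta 3 / 24 - 9 / 8 * zeta 5) := by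
  have hlog : logTwoSin (π / 2) = log 2 := by simp [logTwoSin]
  set p : ℝ[X] := X * (C (1 / 3) * (2 * X ^ 4 - C (3 * π) * X ^ 3 + C (5 / 6 * π ^ 2) * X ^ 2
    + C (π ^ 3 / 4) * X - C (π ^ 4 / 12))) with hp
  have hdeg : p.natDegree ≤ 5 := by rw [hp]; compute_degree
  have hpoly : ∫ x in (0 : ℝ)..π / 2, centeredSq x * (cot x * dilateSum sin 3 x) =
      ∫ x in (0 : ℝ)..π / 2, p.eval x * cot x := by
    refine intervalIntegral.integral_congr fun x hx ↦ ?_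
    rw [Set.uIcc_of_le (by positivity)] at hx
    simp only [dilateSum_sin_three ⟨hx.1, by linarith [hx.2, pi_pos]⟩, centeredSq, hp, eval_mul,
      eval_add, eval_sub, eval_C, eval_X, eval_pow, eval_ofNat]
    ring
  convert hasSum_integral_centeredSq_mul_cot using 1
  rw [hpoly, integral_eval_mul_cot hdeg (dvd_mul_right _ _) (by positivity) (by linarith [pi_pos]),
    hlog]
  simp only [logSinePrimitive, dilateSum_sin_pi_div_two, dilateSum_sin_zero, dilateSum_cos_zero,
    dilateSum_cos_pi_div_two (show 2 ≤ 3 by norm_num),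
    dilateSum_cos_pi_div_two (show 2 ≤ 5 by norm_num)]
  simp [hp, Function.iterate_succ_apply, -map_pow, -map_mul, -map_div₀]
  field_simp
  ring

end EulerSum

section TornheimSums

/-- The summand `1 / (aʳ bˢ (a + b)ᵗ)` of the Tornheim double series, at the positive integers
`a = p.1 + 1` and `b = p.2 + 1`. -/
noncomputable def tornheimTerm (r s t : ℕ) (p : ℕ × ℕ) : ℝ :=
  1 / (((p.1 : ℝ) + 1) ^ r * ((p.2 : ℝ) + 1) ^ s * ((p.1 : ℝ) + 1 + ((p.2 : ℝ) + 1)) ^ t)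

variable {r s : ℕ}

theorem tornheimTerm_nonneg (r s t : ℕ) (p : ℕ × ℕ) : 0 ≤ tornheimTerm r s t p := by
  unfold tornheimTerm; positivity

theorem summable_mul_one_div_succ_pow (hr : 2 ≤ r) (hs : 2 ≤ s) :
    Summable fun p : ℕ × ℕ ↦ 1 / ((p.1 : ℝ) + 1) ^ r * (1 / ((p.2 : ℝ) + 1) ^ s) :=
  (summable_one_div_succ_pow hr).mul_of_nonneg (summable_one_div_succ_pow hs)
    (fun _ ↦ by positivity) fun _ ↦ by positivity

theorem summable_tornheimTerm (u v : ℕ) (hr : 2 ≤ r + u) (hs : 2 ≤ s + v) :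
    Summable (tornheimTerm r s (u + v)) := by
  refine (summable_mul_one_div_succ_pow hr hs).of_nonneg_of_le (tornheimTerm_nonneg r s _)
    fun p ↦ ?_
  rw [tornheimTerm, one_div_mul_one_div]
  refine one_div_le_one_div_of_le (by positivity) ?_
  set a : ℝ := (p.1 : ℝ) + 1
  set b : ℝ := (p.2 : ℝ) + 1
  have ha : 0 < a := by positivity
  have hb : 0 < b := by positivity
  calc a ^ (r + u) * b ^ (s + v) = a ^ r * b ^ s * (a ^ u * b ^ v) := by ring
    _ ≤ a ^ r * b ^ s * ((a + b) ^ u * (a + b) ^ v) := by gcongr <;> linarith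
    _ = a ^ r * b ^ s * (a + b) ^ (u + v) := by ring

theorem tsum_prod_eq_tsum_diag_add {f : ℕ × ℕ → ℝ} (hf : Summable f) :
    ∑' p, f p = ∑' n, f (n, n) +
      (∑' p : ℕ × ℕ, f (p.1 + p.2 + 1, p.2) + ∑' p : ℕ × ℕ, f (p.2, p.1 + p.2 + 1)) := by
  have hdiag : (fun n : ℕ ↦ (n, n)).Injective := fun m n h ↦ (Prod.mk.inj h).1
  have hlower : (fun p : ℕ × ℕ ↦ (p.1 + p.2 + 1, p.2)).Injective := fun p q h ↦ by
    simp only [Prod.mk.injEq] at h; ext <;> lia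
  have hupper : (fun p : ℕ × ℕ ↦ (p.2, p.1 + p.2 + 1)).Injective := fun p q h ↦ by
    simp only [Prod.mk.injEq] at h; ext <;> lia
  have hdisj : Disjoint (Set.range fun p : ℕ × ℕ ↦ (p.1 + p.2 + 1, p.2))
      (Set.range fun p : ℕ × ℕ ↦ (p.2, p.1 + p.2 + 1)) := by
    rw [Set.disjoint_left]
    rintro _ ⟨p, rfl⟩ ⟨q, h⟩
    simp only [Prod.mk.injEq] at h; lia
  have hcompl : IsCompl (Set.range fun n : ℕ ↦ (n, n))
      (Set.range (fun p : ℕ × ℕ ↦ (p.1 + p.2 + 1, p.2)) ∪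
        Set.range fun p : ℕ × ℕ ↦ (p.2, p.1 + p.2 + 1)) := by
    refine IsCompl.of_eq (Set.disjoint_left.mpr ?_).inter_eq (Set.eq_univ_of_forall ?_)
    · rintro _ ⟨n, rfl⟩ (⟨p, h⟩ | ⟨p, h⟩) <;> (simp only [Prod.mk.injEq] at h; lia)
    · rintro ⟨m, n⟩
      rcases lt_trichotomy m n with h | rfl | h
      · exact .inr (.inr ⟨(n - m - 1, m), by simp only [Prod.mk.injEq]; lia⟩)
      · exact .inl ⟨m, rfl⟩
      · exact .inr (.inl ⟨(m - n - 1, n), by simp only [Prod.mk.injEq]; lia⟩)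
  exact ((hdiag.hasSum_range_iff.mpr (hf.comp_injective hdiag).hasSum).add_isCompl hcompl
    ((hlower.hasSum_range_iff.mpr (hf.comp_injective hlower).hasSum).add_disjoint hdisj
      (hupper.hasSum_range_iff.mpr (hf.comp_injective hupper).hasSum))).tsum_eq

theorem zeta_mul_zeta (hr : 2 ≤ r) (hs : 2 ≤ s) :
    zeta r * zeta s = zeta (r + s) +
      (∑' p, tornheimTerm 0 s r p + ∑' p, tornheimTerm 0 r s p) := by
  have hsum := summable_mul_one_div_succ_pow hr hs
  rw [← ((hasSum_zeta hr).mul (hasSum_zeta hs) hsum).tsum_eq, tsum_prod_eq_tsum_diag_add hsum]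
  have hzeta : zeta (r + s) = ∑' n : ℕ, 1 / ((n : ℝ) + 1) ^ (r + s) := rfl
  rw [hzeta]
  congr 1
  · refine tsum_congr fun n ↦ ?_
    rw [one_div_mul_one_div, pow_add]
  congr 1
  all_goals
    refine tsum_congr fun p ↦ ?_
    rw [tornheimTerm, one_div_mul_one_div]
    push_cast
    ring

theorem cast_harmonic (n : ℕ) : (harmonic n : ℝ) = ∑ i ∈ Finset.range n, 1 / ((i : ℝ) + 1) := by
  simp [harmonic]

theorem hasSum_one_div_sub_one_div_add (b : ℕ) :
    HasSum (fun a : ℕ ↦ 1 / ((a : ℝ) + 1) - 1 / ((a : ℝ) + 1 + b)) (harmonic b) := by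
  induction b with
  | zero => simp
  | succ b ih =>
    have hlim : Tendsto (fun a : ℕ ↦ 1 / ((a : ℝ) + 1 + b)) atTop (𝓝 0) :=
      (tendsto_one_div_add_atTop_nhds_zero_nat.comp (tendsto_add_atTop_nat b)).congr fun a ↦ by
        rw [Function.comp_apply]; push_cast; ring
    have htel : HasSum (fun a : ℕ ↦ 1 / ((a : ℝ) + 1 + b) - 1 / (((a + 1 : ℕ) : ℝ) + 1 + b))
        (1 / ((b : ℝ) + 1)) := by
      rw [hasSum_iff_tendsto_nat_of_nonneg fun a ↦ sub_nonneg.mpr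
        (one_div_le_one_div_of_le (by positivity) (by push_cast; linarith))]
      simp only [Finset.sum_range_sub' fun a : ℕ ↦ 1 / ((a : ℝ) + 1 + b)]
      simpa [add_comm] using hlim.const_sub (1 / ((0 : ℕ) + 1 + (b : ℝ)))
    rw [harmonic_succ]
    convert ih.add htel using 1
    · ext a; push_cast; ring
    · push_cast; ring

theorem hasSum_harmonic_div_pow (hs : 2 ≤ s) :
    HasSum (fun b : ℕ ↦ (harmonic (b + 1) : ℝ) / ((b : ℝ) + 1) ^ (s + 1))
      (∑' p, tornheimTerm 1 s 1 p) := by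
  have hsum : Summable (tornheimTerm 1 s 1) := summable_tornheimTerm 1 0 le_rfl hs
  refine ((Equiv.prodComm ℕ ℕ).hasSum_iff.mpr hsum.hasSum).prod_fiberwise fun b ↦ ?_
  have h := (hasSum_one_div_sub_one_div_add (b + 1)).mul_left (1 / ((b : ℝ) + 1) ^ (s + 1))
  rw [one_div_mul_eq_div] at h
  refine h.congr_fun fun a ↦ ?_
  simp only [tornheimTerm, Function.comp_apply, Equiv.prodComm_apply, Prod.swap_prod_mk, pow_one]
  push_cast
  field_simp
  ring

theorem hasSum_harmonic_div_succ_pow (hs : 2 ≤ s) :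
    HasSum (fun b : ℕ ↦ (harmonic b : ℝ) / ((b : ℝ) + 1) ^ (s + 1))
      (∑' p, tornheimTerm 0 1 (s + 1) p) := by
  have hsum : Summable (tornheimTerm 0 1 (s + 1)) := by
    obtain ⟨k, rfl⟩ := Nat.exists_eq_add_of_le hs
    exact summable_tornheimTerm 2 (k + 1) le_rfl (by lia)
  rw [← hasSum_nat_add_iff' 1]
  simp only [Finset.sum_range_one, harmonic_zero, Rat.cast_zero, zero_div, sub_zero]
  refine (hasSum_antidiagonal hsum.hasSum).congr_fun fun n ↦ ?_
  rw [← Finset.Nat.sum_antidiagonal_swap, Finset.Nat.sum_antidiagonal_eq_sum_range_succ_mk,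
    cast_harmonic, Finset.sum_div]
  refine Finset.sum_congr rfl fun k hk ↦ ?_
  have hkn : k ≤ n := Finset.mem_range_succ_iff.mp hk
  simp only [tornheimTerm, Prod.fst_swap, Prod.snd_swap, Nat.cast_sub hkn, pow_zero, pow_one,
    one_mul]
  rw [div_div]
  push_cast
  ring

theorem tsum_tornheimTerm_one_one (hs : 2 ≤ s) :
    ∑' p, tornheimTerm 1 s 1 p = zeta (s + 2) + ∑' p, tornheimTerm 0 1 (s + 1) p := by
  refine (hasSum_harmonic_div_pow hs).unique
    (((hasSum_zeta (by lia : 2 ≤ s + 2)).add (hasSum_harmonic_div_succ_pow hs)).congr_fun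
      fun b ↦ ?_)
  rw [harmonic_succ]
  push_cast
  field_simp
  ring

theorem tornheimTerm_one_three_one (p : ℕ × ℕ) :
    tornheimTerm 1 3 1 p =
      tornheimTerm 0 3 2 p + tornheimTerm 0 2 3 p + tornheimTerm 1 1 3 p := by
  unfold tornheimTerm; field_simp; ring

theorem tornheimTerm_one_one_three (p : ℕ × ℕ) :
    tornheimTerm 1 1 3 p = tornheimTerm 0 1 4 p + tornheimTerm 0 1 4 p.swap := by
  unfold tornheimTerm; simp only [Prod.fst_swap, Prod.snd_swap]; field_simp; ring

theorem summable_tornheimTerm_one_one_three : Summable (tornheimTerm 1 1 3) :=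
  summable_tornheimTerm 1 2 le_rfl (by norm_num)

theorem tsum_tornheimTerm_one_one_three :
    ∑' p, tornheimTerm 1 1 3 p = 4 * zeta 5 - 2 * (zeta 2 * zeta 3) := by
  have h032 : Summable (tornheimTerm 0 3 2) := summable_tornheimTerm 2 0 le_rfl (by norm_num)
  have h023 : Summable (tornheimTerm 0 2 3) := summable_tornheimTerm 2 1 le_rfl (by norm_num)
  have h014 : Summable (tornheimTerm 0 1 4) := summable_tornheimTerm 2 2 le_rfl (by norm_num)
  have hswap : HasSum (fun p : ℕ × ℕ ↦ tornheimTerm 0 1 4 p.swap) (∑' p, tornheimTerm 0 1 4 p) :=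
    (Equiv.prodComm ℕ ℕ).hasSum_iff.mpr h014.hasSum
  have fractions₁ : ∑' p, tornheimTerm 1 3 1 p = ∑' p, tornheimTerm 0 3 2 p +
      ∑' p, tornheimTerm 0 2 3 p + ∑' p, tornheimTerm 1 1 3 p := by
    rw [tsum_congr tornheimTerm_one_three_one, (h032.add h023).tsum_add
      summable_tornheimTerm_one_one_three, h032.tsum_add h023]
  have fractions₂ : ∑' p, tornheimTerm 1 1 3 p =
      ∑' p, tornheimTerm 0 1 4 p + ∑' p, tornheimTerm 0 1 4 p := by
    rw [tsum_congr tornheimTerm_one_one_three]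
    exact (h014.hasSum.add hswap).tsum_eq
  have stuffle := zeta_mul_zeta (le_refl 2) (by norm_num : 2 ≤ 3)
  have harmonic_sums := tsum_tornheimTerm_one_one (by norm_num : 2 ≤ 3)
  norm_num at stuffle harmonic_sums
  linarith

end TornheimSums

section LogSquareIntegral

theorem continuousOn_mul_log_sq : ContinuousOn (fun x ↦ x * log x ^ 2) (Set.Ici 0) := by
  have h : Continuous fun x ↦ 4 * (√x * log √x) ^ 2 :=
    ((continuous_mul_log.comp continuous_sqrt).pow 2).const_mul 4
  refine h.continuousOn.congr fun x (hx : 0 ≤ x) ↦ ?_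
  dsimp only
  rw [log_sqrt hx, mul_pow, sq_sqrt hx]
  ring

/-- A primitive of `x ^ n * log x ^ 2`. -/
noncomputable def powMulLogSqPrimitive (n : ℕ) (x : ℝ) : ℝ :=
  x ^ n * (x * log x ^ 2) / (n + 1) - 2 * (x ^ n * (x * log x)) / (n + 1) ^ 2 +
    2 * x ^ (n + 1) / (n + 1) ^ 3

theorem continuousOn_powMulLogSqPrimitive (n : ℕ) :
    ContinuousOn (powMulLogSqPrimitive n) (Set.Ici 0) := by
  have hlog : ContinuousOn (fun x ↦ x * log x) (Set.Ici 0) := continuous_mul_log.continuousOn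
  have hlog_sq := continuousOn_mul_log_sq
  unfold powMulLogSqPrimitive
  fun_prop

theorem hasDerivAt_powMulLogSqPrimitive (n : ℕ) {x : ℝ} (hx : x ≠ 0) :
    HasDerivAt (powMulLogSqPrimitive n) (x ^ n * log x ^ 2) x := by
  have hlog := hasDerivAt_log hx
  have hpow : HasDerivAt (fun x : ℝ ↦ x ^ (n + 1)) ((n + 1) * x ^ n) x := by
    simpa using hasDerivAt_pow (n + 1) x
  have h := (((hpow.mul (hlog.pow 2)).div_const ((n : ℝ) + 1)).sub
    (((hpow.mul hlog).const_mul 2).div_const (((n : ℝ) + 1) ^ 2))).add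
      ((hpow.const_mul 2).div_const (((n : ℝ) + 1) ^ 3))
  refine (h.congr_of_eventuallyEq (.of_forall fun y ↦ ?_)).congr_deriv ?_
  · simp only [powMulLogSqPrimitive, Pi.add_apply, Pi.sub_apply, Pi.mul_apply, Pi.pow_apply]
    ring
  · simp only [Pi.pow_apply]
    field_simp
    ring

theorem intervalIntegrable_pow_mul_log_sq (n : ℕ) :
    IntervalIntegrable (fun x ↦ x ^ n * log x ^ 2) volume 0 1 := by
  refine intervalIntegral.intervalIntegrable_deriv_of_nonneg (g := powMulLogSqPrimitive n) ?_
    (fun x hx ↦ ?_) fun x hx ↦ ?_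
  · rw [Set.uIcc_of_le zero_le_one]
    exact (continuousOn_powMulLogSqPrimitive n).mono Set.Icc_subset_Ici_self
  all_goals simp only [zero_le_one, inf_of_le_left, sup_of_le_right, Set.mem_Ioo] at hx
  · exact hasDerivAt_powMulLogSqPrimitive n hx.1.ne'
  · have := hx.1
    positivity

theorem integral_pow_mul_log_sq (n : ℕ) :
    ∫ x in (0 : ℝ)..1, x ^ n * log x ^ 2 = 2 / ((n : ℝ) + 1) ^ 3 := by
  rw [intervalIntegral.integral_eq_sub_of_hasDerivAt_of_le zero_le_one
    ((continuousOn_powMulLogSqPrimitive n).mono Set.Icc_subset_Ici_self)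
    (fun x hx ↦ hasDerivAt_powMulLogSqPrimitive n hx.1.ne') (intervalIntegrable_pow_mul_log_sq n)]
  simp [powMulLogSqPrimitive]

theorem hasSum_log_one_sub_sq {x : ℝ} (hx₀ : 0 ≤ x) (hx₁ : x < 1) :
    HasSum (fun p : ℕ × ℕ ↦ x ^ (p.1 + 1) / ((p.1 : ℝ) + 1) * (x ^ (p.2 + 1) / ((p.2 : ℝ) + 1)))
      (log (1 - x) ^ 2) := by
  have h := hasSum_pow_div_log_of_abs_lt_one (by rwa [abs_of_nonneg hx₀])
  have hprod := h.mul h (h.summable.mul_of_nonneg h.summable (fun _ ↦ by positivity)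
    fun _ ↦ by positivity)
  rwa [neg_mul_neg, ← sq] at hprod

theorem integral_mul_log_sq_of_hasSum {ι : Type*} [Countable ι] {c : ι → ℝ} {m : ι → ℕ}
    {f : ℝ → ℝ} (hc : ∀ i, 0 ≤ c i)
    (hf : ∀ x ∈ Set.Ioo (0 : ℝ) 1, HasSum (fun i ↦ c i * x ^ m i) (f x))
    (hsum : Summable fun i ↦ c i * (2 / ((m i : ℝ) + 1) ^ 3)) :
    ∫ x in (0 : ℝ)..1, f x * log x ^ 2 = ∑' i, c i * (2 / ((m i : ℝ) + 1) ^ 3) := by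
  set F : ι → ℝ → ℝ := fun i x ↦ c i * (x ^ m i * log x ^ 2) with hF
  have hint (i) : IntegrableOn (F i) (Set.Ioo 0 1) :=
    ((intervalIntegrable_iff_integrableOn_Ioo_of_le zero_le_one).mp
      (intervalIntegrable_pow_mul_log_sq _)).const_mul _
  have hval (i) : ∫ x in Set.Ioo (0 : ℝ) 1, F i x = c i * (2 / ((m i : ℝ) + 1) ^ 3) := by
    rw [hF, integral_const_mul, ← integral_Ioc_eq_integral_Ioo,
      ← intervalIntegral.integral_of_le zero_le_one, integral_pow_mul_log_sq]
  have hnorm (i) : ∫ x in Set.Ioo (0 : ℝ) 1, ‖F i x‖ = c i * (2 / ((m i : ℝ) + 1) ^ 3) := by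
    rw [← hval]
    refine setIntegral_congr_fun measurableSet_Ioo fun x hx ↦ norm_of_nonneg ?_
    have := hx.1
    have := hc i
    positivity
  have hpoint (x) (hx : x ∈ Set.Ioo (0 : ℝ) 1) : ∑' i, F i x = f x * log x ^ 2 := by
    rw [← ((hf x hx).mul_right (log x ^ 2)).tsum_eq]
    exact tsum_congr fun i ↦ (mul_assoc _ _ _).symm
  rw [intervalIntegral.integral_of_le zero_le_one, integral_Ioc_eq_integral_Ioo,
    ← setIntegral_congr_fun measurableSet_Ioo hpoint,
    ← integral_tsum_of_summable_integral_norm hint (by simpa only [hnorm] using hsum)]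
  exact tsum_congr hval

theorem integral_log_sq_mul_log_one_sub_sq_div :
    ∫ x in (0 : ℝ)..1, log x ^ 2 * log (1 - x) ^ 2 / x =
      8 * zeta 5 - 2 / 3 * π ^ 2 * zeta 3 := by
  set c : ℕ × ℕ → ℝ := fun p ↦ 1 / (((p.1 : ℝ) + 1) * ((p.2 : ℝ) + 1)) with hc
  have hf (x) (hx : x ∈ Set.Ioo (0 : ℝ) 1) :
      HasSum (fun p ↦ c p * x ^ (p.1 + p.2 + 1)) (log (1 - x) ^ 2 / x) := by
    refine ((hasSum_log_one_sub_sq hx.1.le hx.2).div_const x).congr_fun fun p ↦ ?_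
    have := hx.1
    rw [hc]
    field_simp
    ring
  have hterm (p : ℕ × ℕ) :
      c p * (2 / (((p.1 + p.2 + 1 : ℕ) : ℝ) + 1) ^ 3) = 2 * tornheimTerm 1 1 3 p := by
    rw [hc, tornheimTerm]
    push_cast
    field_simp
    ring
  have h := integral_mul_log_sq_of_hasSum (fun p ↦ by positivity) hf
    ((summable_tornheimTerm_one_one_three.mul_left 2).congr fun p ↦ (hterm p).symm)
  rw [tsum_congr hterm, tsum_mul_left, tsum_tornheimTerm_one_one_three, zeta_two] at h
  calc _ = ∫ x in (0 : ℝ)..1, log (1 - x) ^ 2 / x * log x ^ 2 := by congr! 2; ring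
    _ = _ := by rw [h]; ring

end LogSquareIntegral

section ArcsineSeries

/-- The `n`-th partial sum of the series of `2 * arcsin (v / 2) ^ 2`, at `v = 2 * sin x`. -/
noncomputable def arcsinSqSum (n : ℕ) (x : ℝ) : ℝ :=
  ∑ k ∈ Finset.range n,
    (2 * sin x) ^ (2 * (k + 1)) / (((k : ℝ) + 1) ^ 2 * (k + 1).centralBinom)

/-- The derivative of `arcsinSqSum n`. -/
noncomputable def arcsinSqSumDeriv (n : ℕ) (x : ℝ) : ℝ :=
  ∑ k ∈ Finset.range n,
    4 * cos x * (2 * sin x) ^ (2 * k + 1) / (((k : ℝ) + 1) * (k + 1).centralBinom)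

theorem hasDerivAt_two_mul_sin_pow_succ (m : ℕ) (x : ℝ) :
    HasDerivAt (fun x ↦ (2 * sin x) ^ (m + 1)) ((m + 1) * (2 * sin x) ^ m * (2 * cos x)) x := by
  simpa using ((hasDerivAt_sin x).const_mul 2).fun_pow (m + 1)

theorem hasDerivAt_arcsinSqSum (n : ℕ) (x : ℝ) :
    HasDerivAt (arcsinSqSum n) (arcsinSqSumDeriv n x) x := by
  unfold arcsinSqSum arcsinSqSumDeriv
  refine HasDerivAt.fun_sum fun k _ ↦
    ((hasDerivAt_two_mul_sin_pow_succ (2 * k + 1) x).div_const _).congr_deriv ?_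
  have := (k + 1).centralBinom_ne_zero
  push_cast
  field_simp
  ring

theorem hasDerivAt_arcsinSqSumDeriv (n : ℕ) (x : ℝ) :
    HasDerivAt (arcsinSqSumDeriv n) (4 - 4 * (2 * sin x) ^ (2 * n) / n.centralBinom) x := by
  induction n with
  | zero => exact (hasDerivAt_const x 0).congr_deriv (by simp)
  | succ n ih =>
    have hterm := (((hasDerivAt_cos x).const_mul 4).fun_mul
      (hasDerivAt_two_mul_sin_pow_succ (2 * n) x)).div_const
        (((n : ℝ) + 1) * (n + 1).centralBinom)
    refine ((ih.fun_add hterm).congr_of_eventuallyEq (.of_forall fun y ↦ ?_)).congr_deriv ?_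
    · simp [arcsinSqSumDeriv, Finset.sum_range_succ]
    have hn := n.centralBinom_ne_zero
    have hrec : ((n + 1).centralBinom : ℝ) = 2 * (2 * n + 1) * n.centralBinom / (n + 1) := by
      rw [eq_div_iff (by positivity), mul_comm]
      exact_mod_cast n.succ_mul_centralBinom_succ
    have hpow : (2 * sin x) ^ (2 * (n + 1)) = (2 * sin x) ^ (2 * n) * (4 * (1 - cos x ^ 2)) := by
      rw [← sin_sq]
      ring
    rw [hrec, hpow, pow_succ (2 * sin x) (2 * n)]
    generalize (2 * sin x) ^ (2 * n) = y
    push_cast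
    field_simp
    rw [sin_sq]
    ring

theorem two_mul_sin_mem_Icc {x : ℝ} (hx : x ∈ Set.Icc 0 (π / 6)) : 2 * sin x ∈ Set.Icc 0 1 := by
  have hπ := pi_pos
  have h₀ := sin_nonneg_of_nonneg_of_le_pi hx.1 (by linarith [hx.2])
  have h₁ := sin_le_sin_of_le_of_le_pi_div_two (by linarith [hx.1]) (by linarith) hx.2
  rw [sin_pi_div_six] at h₁
  exact ⟨by linarith, by linarith⟩

theorem abs_le_of_abs_deriv_le {f f' : ℝ → ℝ} {b C : ℝ} (hb : b ≤ 1) (hf₀ : f 0 = 0)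
    (hf : ∀ x, HasDerivAt f (f' x) x) (hC : ∀ x ∈ Set.Icc 0 b, |f' x| ≤ C) :
    ∀ x ∈ Set.Icc 0 b, |f x| ≤ C := fun x hx ↦ by
  have h := norm_image_sub_le_of_norm_deriv_le_segment' (fun x _ ↦ (hf x).hasDerivWithinAt)
    (fun x hx ↦ hC x ⟨hx.1, hx.2.le⟩) x hx
  rw [hf₀, sub_zero, sub_zero, norm_eq_abs] at h
  exact h.trans (mul_le_of_le_one_right ((abs_nonneg _).trans (hC x hx)) (hx.2.trans hb))

theorem abs_two_mul_sq_sub_arcsinSqSum_le (n : ℕ) {x : ℝ} (hx : x ∈ Set.Icc 0 (π / 6)) :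
    |2 * x ^ 2 - arcsinSqSum n x| ≤ 4 * (1 / 2) ^ n := by
  have hπ : π / 6 ≤ 1 := by linarith [pi_le_four]
  have second_deriv_le (x) (hx : x ∈ Set.Icc 0 (π / 6)) :
      |4 * 1 - (4 - 4 * (2 * sin x) ^ (2 * n) / n.centralBinom)| ≤ 4 * (1 / 2) ^ n := by
    obtain ⟨h₀, h₁⟩ := two_mul_sin_mem_Icc hx
    have hC : (2 : ℝ) ^ n ≤ n.centralBinom := mod_cast two_pow_le_centralBinom n
    rw [mul_one, sub_sub_cancel, abs_of_nonneg (by positivity), one_div_pow, mul_one_div]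
    gcongr
    exact mul_le_of_le_one_right zero_le_four (pow_le_one₀ h₀ h₁)
  have deriv_le := abs_le_of_abs_deriv_le hπ (f := fun x ↦ 4 * x - arcsinSqSumDeriv n x)
    (by simp [arcsinSqSumDeriv])
    (fun x ↦ ((hasDerivAt_id' x).const_mul 4).fun_sub (hasDerivAt_arcsinSqSumDeriv n x))
    second_deriv_le
  refine abs_le_of_abs_deriv_le hπ (f := fun x ↦ 2 * x ^ 2 - arcsinSqSum n x)
    (by simp [arcsinSqSum]) (fun x ↦ ?_) deriv_le x hx
  refine (((hasDerivAt_pow 2 x).const_mul 2).fun_sub (hasDerivAt_arcsinSqSum n x)).congr_deriv ?_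
  norm_num
  ring

theorem hasSum_two_mul_sin_pow_div_centralBinom {x : ℝ} (hx : x ∈ Set.Icc 0 (π / 6)) :
    HasSum (fun k : ℕ ↦ (2 * sin x) ^ (2 * (k + 1)) / (((k : ℝ) + 1) ^ 2 * (k + 1).centralBinom))
      (2 * x ^ 2) := by
  have h₀ := (two_mul_sin_mem_Icc hx).1
  rw [hasSum_iff_tendsto_nat_of_nonneg (fun k ↦ by positivity), tendsto_iff_norm_sub_tendsto_zero]
  refine squeeze_zero (fun _ ↦ norm_nonneg _)
    (fun n ↦ (norm_sub_rev _ _).trans_le (abs_two_mul_sq_sub_arcsinSqSum_le n hx)) ?_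
  simpa using (tendsto_pow_atTop_nhds_zero_of_lt_one (by norm_num : (0 : ℝ) ≤ 1 / 2)
    one_half_lt_one).const_mul 4

theorem hasSum_two_mul_arcsin_sq {v : ℝ} (hv : v ∈ Set.Icc 0 1) :
    HasSum (fun k : ℕ ↦ v ^ (2 * (k + 1)) / (((k : ℝ) + 1) ^ 2 * (k + 1).centralBinom))
      (2 * arcsin (v / 2) ^ 2) := by
  have hmem : arcsin (v / 2) ∈ Set.Icc 0 (π / 6) := by
    have hπ := pi_pos
    refine ⟨arcsin_nonneg.mpr (by linarith [hv.1]),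
      (arcsin_le_iff_le_sin' ⟨by linarith, by linarith⟩).mpr ?_⟩
    rw [sin_pi_div_six]
    linarith [hv.2]
  have h := hasSum_two_mul_sin_pow_div_centralBinom hmem
  rwa [sin_arcsin (by linarith [hv.1]) (by linarith [hv.2]), mul_div_cancel₀ _ two_ne_zero] at h

end ArcsineSeries

section SineSubstitution

theorem integral_comp_two_mul_sin (f : ℝ → ℝ) :
    ∫ x in 0..π / 6, 2 * cos x * f (2 * sin x) = ∫ v in 0..1, f v := by
  have hπ := pi_pos
  have hsub : Set.Icc 0 (π / 6) ⊆ Set.Icc (-(π / 2)) (π / 2) :=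
    Set.Icc_subset_Icc (by linarith) (by linarith)
  have hmono : StrictMonoOn (fun x ↦ 2 * sin x) (Set.Icc 0 (π / 6)) :=
    fun x hx y hy hxy ↦ by
      simpa using strictMonoOn_sin (hsub hx) (hsub hy) hxy
  have himage : (fun x ↦ 2 * sin x) '' Set.Icc 0 (π / 6) = Set.Icc 0 1 := by
    rw [ContinuousOn.image_Icc_of_monotoneOn (by positivity) (by fun_prop) hmono.monotoneOn]
    simp
  rw [intervalIntegral.integral_of_le zero_le_one, intervalIntegral.integral_of_le (by positivity),
    ← integral_Icc_eq_integral_Ioc, ← integral_Icc_eq_integral_Ioc, ← himage,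
    integral_image_eq_integral_abs_deriv_smul measurableSet_Icc
      (fun x _ ↦ ((hasDerivAt_sin x).const_mul 2).hasDerivWithinAt) hmono.injOn]
  refine setIntegral_congr_fun measurableSet_Icc fun x hx ↦ ?_
  have := cos_nonneg_of_mem_Icc (hsub hx)
  rw [abs_of_nonneg (by positivity), smul_eq_mul]

theorem centralBinomFive_eq_integral :
    centralBinomFive = ∫ x in 0..π / 6, 8 * x ^ 2 * logTwoSin x ^ 2 * cot x := by
  have hcoeff (k : ℕ) : 4 / (((k : ℝ) + 1) ^ 2 * (k + 1).centralBinom) *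
      (2 / (((2 * k + 1 : ℕ) : ℝ) + 1) ^ 3) =
        1 / (((k : ℝ) + 1) ^ 5 * (k + 1).centralBinom) := by
    have := (k + 1).centralBinom_ne_zero
    push_cast
    field_simp
    ring
  have hseries (v) (hv : v ∈ Set.Ioo (0 : ℝ) 1) :
      HasSum (fun k : ℕ ↦ 4 / (((k : ℝ) + 1) ^ 2 * (k + 1).centralBinom) * v ^ (2 * k + 1))
        (4 / v * (2 * arcsin (v / 2) ^ 2)) := by
    have := hv.1
    refine ((hasSum_two_mul_arcsin_sq (Set.Ioo_subset_Icc_self hv)).mul_left (4 / v)).congr_fun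
      fun k ↦ ?_
    field_simp
    ring
  have h := integral_mul_log_sq_of_hasSum (fun k ↦ by positivity) hseries
    (hasSum_centralBinomFive.summable.congr fun k ↦ (hcoeff k).symm)
  rw [tsum_congr hcoeff] at h
  rw [centralBinomFive, ← h, ← integral_comp_two_mul_sin]
  refine intervalIntegral.integral_congr fun x hx ↦ ?_
  have hπ := pi_pos
  rw [Set.uIcc_of_le (by positivity)] at hx
  rw [mul_div_cancel_left₀ _ two_ne_zero, arcsin_sin (by linarith [hx.1]) (by linarith [hx.2]),
    cot_eq_cos_div_sin, logTwoSin]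
  rcases eq_or_ne (sin x) 0 with h₀ | h₀
  · simp [h₀]
  field_simp
  ring

end SineSubstitution

section Cis

/-- The point of the unit circle with argument `t`. -/
noncomputable def cis (t : ℝ) : ℂ := Complex.exp (t * Complex.I)

theorem cis_re (t : ℝ) : (cis t).re = cos t := Complex.exp_ofReal_mul_I_re t

theorem cis_im (t : ℝ) : (cis t).im = sin t := Complex.exp_ofReal_mul_I_im t

theorem cis_eq (t : ℝ) : cis t = cos t + sin t * Complex.I := by
  rw [cis, Complex.exp_mul_I, Complex.ofReal_cos, Complex.ofReal_sin]

theorem cis_ne_zero (t : ℝ) : cis t ≠ 0 := Complex.exp_ne_zero _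

@[fun_prop]
theorem continuous_cis : Continuous cis := by unfold cis; fun_prop

theorem hasDerivAt_cis (t : ℝ) : HasDerivAt cis (cis t * Complex.I) t :=
  (((hasDerivAt_id' t).ofReal_comp.mul_const Complex.I).cexp).congr_deriv (by simp [cis])

theorem hasDerivAt_cis_const_mul (c t : ℝ) :
    HasDerivAt (fun t ↦ cis (c * t)) (c * Complex.I * cis (c * t)) t := by
  refine ((hasDerivAt_cis (c * t)).scomp t ((hasDerivAt_id' t).const_mul c)).congr_deriv ?_
  rw [mul_one, Complex.real_smul]
  ring

theorem log_cis {t : ℝ} (ht₀ : -π < t) (ht₁ : t ≤ π) : Complex.log (cis t) = t * Complex.I := by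
  apply Complex.log_exp <;> simpa

theorem one_sub_cis_two_mul (x : ℝ) : 1 - cis (2 * x) = (2 * sin x : ℝ) * cis (x - π / 2) := by
  apply Complex.ext
  · rw [Complex.sub_re, Complex.re_ofReal_mul, cis_re, cis_re, cos_sub_pi_div_two, cos_two_mul',
      Complex.one_re, cos_sq']
    ring
  · rw [Complex.sub_im, Complex.im_ofReal_mul, cis_im, cis_im, sin_sub_pi_div_two, sin_two_mul,
      Complex.one_im]
    ring

theorem one_sub_cis_neg_two_mul (x : ℝ) :
    1 - cis (-2 * x) = (2 * sin x : ℝ) * cis (π / 2 - x) := by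
  have hcis : cis (-x - π / 2) = -cis (π / 2 - x) := by
    apply Complex.ext <;> simp only [cis_re, cis_im, Complex.neg_re, Complex.neg_im]
    · rw [← cos_sub_pi]; ring_nf
    · rw [← sin_sub_pi]; ring_nf
  have h := one_sub_cis_two_mul (-x)
  rw [sin_neg, hcis, mul_neg, mul_neg, ← neg_mul] at h
  exact h.trans (by push_cast; ring)

theorem log_one_sub_cis_two_mul {x : ℝ} (hx₀ : 0 < x) (hxπ : x < π) :
    Complex.log (1 - cis (2 * x)) = logTwoSin x - (π / 2 - x : ℝ) * Complex.I := by
  have := sin_pos_of_pos_of_lt_pi hx₀ hxπ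
  rw [one_sub_cis_two_mul, Complex.log_ofReal_mul (by positivity) (cis_ne_zero _),
    log_cis (by linarith) (by linarith), logTwoSin]
  push_cast
  ring

theorem log_one_sub_cis_neg_two_mul {x : ℝ} (hx₀ : 0 < x) (hxπ : x < π) :
    Complex.log (1 - cis (-2 * x)) = logTwoSin x + (π / 2 - x : ℝ) * Complex.I := by
  have := sin_pos_of_pos_of_lt_pi hx₀ hxπ
  rw [one_sub_cis_neg_two_mul, Complex.log_ofReal_mul (by positivity) (cis_ne_zero _),
    log_cis (by linarith) (by linarith), logTwoSin]

end Cis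

section BoundedHolomorphic

variable {f : ℂ → ℂ} {c : ℂ} {r C : ℝ}

theorem exists_continuous_primitive_of_norm_le (hf : DifferentiableOn ℂ f (Metric.ball c r))
    (hC : ∀ w ∈ Metric.ball c r, ‖f w‖ ≤ C) :
    ∃ g, Continuous g ∧ ∀ w ∈ Metric.ball c r, HasDerivAt g (f w) w := by
  obtain ⟨g₀, hg₀⟩ := hf.isExactOn_ball
  have hlip : LipschitzOnWith C.toNNReal g₀ (Metric.ball c r) :=
    (convex_ball c r).lipschitzOnWith_of_nnnorm_hasDerivWithin_le
      (fun w hw ↦ (hg₀ w hw).hasDerivWithinAt) fun w hw ↦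
        NNReal.coe_le_coe.mp ((hC w hw).trans (le_coe_toNNReal C))
  obtain ⟨g, hg, hgg₀⟩ := hlip.extend_finite_dimension
  exact ⟨g, hg.continuous, fun w hw ↦ (hg₀ w hw).congr_of_eventuallyEq <|
    (Metric.isOpen_ball.eventually_mem hw).mono fun y hy ↦ (hgg₀ hy).symm⟩

theorem intervalIntegrable_comp_mul_of_norm_le {U : Set ℂ} {a b : ℝ} {γ γ' : ℝ → ℂ}
    (hf : ContinuousOn f U) (hC : ∀ w ∈ U, ‖f w‖ ≤ C) (hab : a ≤ b) (hγ : Continuous γ)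
    (hγ' : Continuous γ') (hU : ∀ t ∈ Set.Ioo a b, γ t ∈ U) :
    IntervalIntegrable (fun t ↦ f (γ t) * γ' t) volume a b := by
  have hmeas : AEStronglyMeasurable (fun t ↦ f (γ t)) (volume.restrict (Set.uIoc a b)) := by
    rw [Set.uIoc_of_le hab, ← restrict_Ioo_eq_restrict_Ioc]
    exact (hf.comp hγ.continuousOn hU).aestronglyMeasurable measurableSet_Ioo
  have hbound : ∀ᵐ t ∂volume.restrict (Set.uIoc a b), ‖f (γ t)‖ ≤ C := by
    rw [Set.uIoc_of_le hab, ← restrict_Ioo_eq_restrict_Ioc]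
    exact ae_restrict_of_forall_mem measurableSet_Ioo fun t ht ↦ hC _ (hU t ht)
  rw [intervalIntegrable_iff]
  exact (intervalIntegrable_iff.mp (hγ'.intervalIntegrable a b)).bdd_mul hmeas hbound

end BoundedHolomorphic

section LogSqProduct

theorem exists_norm_mul_norm_log_sq_le (R : ℝ) :
    ∃ M, ∀ w : ℂ, ‖w‖ ≤ R → ‖w‖ * ‖Complex.log w‖ ^ 2 ≤ M := by
  have hcont : ContinuousOn (fun t ↦ t * log t ^ 2 + 2 * π * |t * log t| + π ^ 2 * t)
      (Set.Icc 0 R) :=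
    ((continuousOn_mul_log_sq.mono Set.Icc_subset_Ici_self).add
      (continuous_mul_log.abs.const_mul _).continuousOn).add (by fun_prop)
  obtain ⟨M, hM⟩ := isCompact_Icc.exists_bound_of_continuousOn hcont
  refine ⟨M, fun w hw ↦ ?_⟩
  have hlog : ‖Complex.log w‖ ≤ |log ‖w‖| + π := by
    refine (Complex.norm_le_abs_re_add_abs_im _).trans ?_
    rw [Complex.log_re, Complex.log_im]
    gcongr
    exact Complex.abs_arg_le_pi w
  calc ‖w‖ * ‖Complex.log w‖ ^ 2 ≤ ‖w‖ * (|log ‖w‖| + π) ^ 2 := by gcongr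
    _ = ‖w‖ * log ‖w‖ ^ 2 + 2 * π * |‖w‖ * log ‖w‖| + π ^ 2 * ‖w‖ := by
      rw [abs_mul, abs_norm, add_sq, sq_abs]
      ring
    _ ≤ M := (le_norm_self _).trans (hM _ ⟨norm_nonneg w, hw⟩)

/-- The integrand `log² w log² (1 - w) / w` of the contour argument. -/
noncomputable def logSqProduct (w : ℂ) : ℂ := Complex.log w ^ 2 * Complex.log (1 - w) ^ 2 / w

theorem exists_norm_logSqProduct_le (R : ℝ) : ∃ C, ∀ w : ℂ, ‖w‖ ≤ R → ‖logSqProduct w‖ ≤ C := by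
  obtain ⟨M, hM⟩ := exists_norm_mul_norm_log_sq_le (R + 1)
  refine ⟨9 / 4 * M + 8 * M ^ 2, fun w hw ↦ ?_⟩
  have hw' : ‖1 - w‖ ≤ R + 1 := (norm_sub_le 1 w).trans (by rw [norm_one]; linarith)
  have hp := hM w (by linarith)
  have hq := hM (1 - w) hw'
  have hM₀ : 0 ≤ M := le_trans (by positivity) hp
  rw [logSqProduct, norm_div, norm_mul, norm_pow, norm_pow]
  have log_sq_le {u : ℂ} (hu : ‖u‖ ≤ 1 / 2) : ‖Complex.log (1 - u)‖ ^ 2 ≤ 9 / 4 * ‖u‖ ^ 2 := by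
    have h := Complex.norm_log_one_add_half_le_self (z := -u) (by rwa [norm_neg])
    rw [← sub_eq_add_neg, norm_neg] at h
    calc _ ≤ (3 / 2 * ‖u‖) ^ 2 := by gcongr
      _ = _ := by ring
  rcases le_or_gt ‖w‖ (1 / 2) with near_zero | hw₂
  · calc _ ≤ ‖Complex.log w‖ ^ 2 * (9 / 4 * ‖w‖ ^ 2) / ‖w‖ := by gcongr; exact log_sq_le near_zero
      _ = 9 / 4 * (‖w‖ * ‖Complex.log w‖ ^ 2) := by
        rcases eq_or_ne ‖w‖ 0 with h | h
        · simp [h]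
        · field_simp
      _ ≤ _ := by nlinarith
  rw [div_le_iff₀ (by linarith)]
  rcases le_or_gt ‖1 - w‖ (1 / 2) with near_one | hw₃
  · have hlog := log_sq_le near_one
    rw [sub_sub_cancel] at hlog
    calc _ ≤ 9 / 4 * ‖1 - w‖ ^ 2 * ‖Complex.log (1 - w)‖ ^ 2 := by gcongr
      _ = 9 / 4 * ‖1 - w‖ * (‖1 - w‖ * ‖Complex.log (1 - w)‖ ^ 2) := by ring
      _ ≤ 9 / 4 * (1 / 2) * M := by gcongr
      _ ≤ _ := by nlinarith
  · have hlog : ‖Complex.log w‖ ^ 2 ≤ 2 * M := by nlinarith [sq_nonneg ‖Complex.log w‖]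
    have hlog' : ‖Complex.log (1 - w)‖ ^ 2 ≤ 2 * M := by
      nlinarith [sq_nonneg ‖Complex.log (1 - w)‖]
    calc _ ≤ 2 * M * (2 * M) := by gcongr
      _ ≤ _ := by nlinarith

end LogSqProduct

section ArcDisc

/-- The open disc bounded by the circle through `0`, `1` and `1 + 2 i`. It contains the segment
`(0, 1)` and both arcs of the contour, and avoids the branch cuts of `log w` and `log (1 - w)`. -/
def arcDisc : Set ℂ := Metric.ball (1 / 2 + Complex.I) (√5 / 2)

theorem mem_arcDisc {w : ℂ} : w ∈ arcDisc ↔ w.re ^ 2 + w.im ^ 2 < w.re + 2 * w.im := by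
  rw [arcDisc, Metric.mem_ball, dist_eq_norm, Complex.norm_eq_sqrt_sq_add_sq,
    sqrt_lt' (by positivity), div_pow, sq_sqrt (by norm_num)]
  simp only [Complex.sub_re, Complex.sub_im, Complex.add_re, Complex.add_im, Complex.I_re,
    Complex.I_im, Complex.div_ofNat_re, Complex.div_ofNat_im, Complex.one_re, Complex.one_im]
  constructor <;> intro h <;> linarith

theorem mem_slitPlane_of_mem_arcDisc {w : ℂ} (hw : w ∈ arcDisc) : w ∈ Complex.slitPlane := by
  rw [mem_arcDisc] at hw
  rw [Complex.mem_slitPlane_iff, or_iff_not_imp_right, not_not]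
  intro him
  rw [him] at hw
  nlinarith [sq_nonneg w.re]

theorem one_sub_mem_slitPlane_of_mem_arcDisc {w : ℂ} (hw : w ∈ arcDisc) :
    1 - w ∈ Complex.slitPlane := by
  rw [mem_arcDisc] at hw
  rw [Complex.mem_slitPlane_iff, or_iff_not_imp_right, not_not, Complex.sub_re, Complex.sub_im,
    Complex.one_re, Complex.one_im, zero_sub, neg_eq_zero]
  intro him
  rw [him] at hw
  nlinarith [sq_nonneg w.re]

theorem ofReal_mem_arcDisc {t : ℝ} (ht : t ∈ Set.Ioo (0 : ℝ) 1) : (t : ℂ) ∈ arcDisc := by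
  rw [mem_arcDisc, Complex.ofReal_re, Complex.ofReal_im]
  nlinarith [ht.1, ht.2]

theorem sin_lt_two_mul_cos {x : ℝ} (hx₀ : 0 < x) (hx₁ : x ≤ π / 4) : sin x < 2 * cos x := by
  have hcos : 0 < cos x := cos_pos_of_mem_Ioo ⟨by linarith, by linarith [pi_pos]⟩
  have hsin : sin x ≤ cos x := by
    rw [← cos_pi_div_two_sub]
    exact cos_le_cos_of_nonneg_of_le_pi hx₀.le (by linarith) (by linarith)
  linarith

theorem cis_two_mul_mem_arcDisc {x : ℝ} (hx₀ : 0 < x) (hx₁ : x ≤ π / 4) :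
    cis (2 * x) ∈ arcDisc := by
  have hsin := sin_pos_of_pos_of_lt_pi hx₀ (by linarith [pi_pos])
  rw [mem_arcDisc, cis_re, cis_im, cos_sq_add_sin_sq, cos_two_mul', cos_sq', sin_two_mul]
  nlinarith [sin_lt_two_mul_cos hx₀ hx₁]

theorem one_sub_cis_neg_two_mul_mem_arcDisc {x : ℝ} (hx₀ : 0 < x) (hx₁ : x ≤ π / 4) :
    1 - cis (-2 * x) ∈ arcDisc := by
  have hsin := sin_pos_of_pos_of_lt_pi hx₀ (by linarith [pi_pos])
  have hlt := sin_lt_two_mul_cos hx₀ hx₁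
  rw [mem_arcDisc, one_sub_cis_neg_two_mul, Complex.re_ofReal_mul, Complex.im_ofReal_mul, cis_re,
    cis_im, cos_pi_div_two_sub, sin_pi_div_two_sub]
  have hsq : (2 * sin x * sin x) ^ 2 + (2 * sin x * cos x) ^ 2 = 4 * sin x ^ 2 := by
    rw [← mul_one (4 * sin x ^ 2), ← sin_sq_add_cos_sq x]
    ring
  nlinarith

theorem one_sub_cis_neg_pi_div_three : 1 - cis (-2 * (π / 6)) = cis (2 * (π / 6)) := by
  rw [one_sub_cis_neg_two_mul, sin_pi_div_six, mul_one_div_cancel two_ne_zero, Complex.ofReal_one,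
    one_mul]
  ring_nf

theorem differentiableOn_logSqProduct : DifferentiableOn ℂ logSqProduct arcDisc := fun w hw ↦ by
  have hw₀ := mem_slitPlane_of_mem_arcDisc hw
  have hw₁ := one_sub_mem_slitPlane_of_mem_arcDisc hw
  have hlog : DifferentiableAt ℂ (fun w ↦ Complex.log (1 - w)) w :=
    (Complex.differentiableAt_log hw₁).fun_comp' w (by fun_prop)
  exact ((((Complex.differentiableAt_log hw₀).pow 2).mul (hlog.pow 2)).div differentiableAt_id
    (Complex.slitPlane_ne_zero hw₀)).differentiableWithinAt

theorem exists_norm_logSqProduct_le_on_arcDisc :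
    ∃ C, ∀ w ∈ arcDisc, ‖logSqProduct w‖ ≤ C := by
  obtain ⟨R, hR⟩ := (Metric.isBounded_ball (x := 1 / 2 + Complex.I) (r := √5 / 2)).exists_norm_le
  obtain ⟨C, hC⟩ := exists_norm_logSqProduct_le R
  exact ⟨C, fun w hw ↦ hC w (hR w hw)⟩

end ArcDisc

section Contour

theorem intervalIntegrable_logSqProduct_comp_mul {a b : ℝ} {γ γ' : ℝ → ℂ} (hab : a ≤ b)
    (hγ : Continuous γ) (hγ' : Continuous γ') (hmem : ∀ t ∈ Set.Ioo a b, γ t ∈ arcDisc) :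
    IntervalIntegrable (fun t ↦ logSqProduct (γ t) * γ' t) volume a b := by
  obtain ⟨C, hC⟩ := exists_norm_logSqProduct_le_on_arcDisc
  exact intervalIntegrable_comp_mul_of_norm_le differentiableOn_logSqProduct.continuousOn hC hab hγ
    hγ' hmem

theorem exists_integral_logSqProduct_comp_mul :
    ∃ g : ℂ → ℂ, ∀ {a b : ℝ} {γ γ' : ℝ → ℂ}, a ≤ b → Continuous γ → Continuous γ' →
      (∀ t ∈ Set.Ioo a b, γ t ∈ arcDisc) → (∀ t, HasDerivAt γ (γ' t) t) →
        ∫ t in a..b, logSqProduct (γ t) * γ' t = g (γ b) - g (γ a) := by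
  obtain ⟨C, hC⟩ := exists_norm_logSqProduct_le_on_arcDisc
  obtain ⟨g, hg, hderiv⟩ := exists_continuous_primitive_of_norm_le differentiableOn_logSqProduct hC
  refine ⟨g, fun hab hγ hγ' hmem hd ↦ ?_⟩
  exact intervalIntegral.integral_eq_sub_of_hasDerivAt_of_le hab (hg.comp hγ).continuousOn
    (fun t ht ↦ (hderiv _ (hmem t ht)).comp t (hd t))
    (intervalIntegrable_logSqProduct_comp_mul hab hγ hγ' hmem)

/-- The pull-back of `logSqProduct w dw` to the arc `w = 1 - exp (-2 i x)`. -/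
noncomputable def innerArcIntegrand (x : ℝ) : ℂ :=
  logSqProduct (1 - cis (-2 * x)) * (2 * Complex.I * cis (-2 * x))

/-- The pull-back of `logSqProduct w dw` to the arc `w = exp (2 i x)`. -/
noncomputable def outerArcIntegrand (x : ℝ) : ℂ :=
  logSqProduct (cis (2 * x)) * (2 * Complex.I * cis (2 * x))

theorem hasDerivAt_one_sub_cis_neg_two_mul (x : ℝ) :
    HasDerivAt (fun x ↦ 1 - cis (-2 * x)) (2 * Complex.I * cis (-2 * x)) x :=
  ((hasDerivAt_cis_const_mul (-2) x).const_sub 1).congr_deriv (by push_cast; ring)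

theorem hasDerivAt_cis_two_mul (x : ℝ) :
    HasDerivAt (fun x ↦ cis (2 * x)) (2 * Complex.I * cis (2 * x)) x :=
  (hasDerivAt_cis_const_mul 2 x).congr_deriv (by push_cast; ring)

theorem intervalIntegrable_innerArcIntegrand :
    IntervalIntegrable innerArcIntegrand volume 0 (π / 6) :=
  intervalIntegrable_logSqProduct_comp_mul (by positivity) (by fun_prop) (by fun_prop)
    fun _ hx ↦ one_sub_cis_neg_two_mul_mem_arcDisc hx.1 (by linarith [hx.2, pi_pos])

theorem intervalIntegrable_outerArcIntegrand :
    IntervalIntegrable outerArcIntegrand volume 0 (π / 6) :=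
  intervalIntegrable_logSqProduct_comp_mul (by positivity) (by fun_prop) (by fun_prop)
    fun _ hx ↦ cis_two_mul_mem_arcDisc hx.1 (by linarith [hx.2, pi_pos])

theorem integral_logSqProduct : ∫ t in (0 : ℝ)..1, logSqProduct t =
    ((8 * zeta 5 - 2 / 3 * π ^ 2 * zeta 3 : ℝ) : ℂ) := by
  rw [← integral_log_sq_mul_log_one_sub_sq_div, ← intervalIntegral.integral_ofReal]
  refine intervalIntegral.integral_congr fun t ht ↦ ?_
  rw [Set.uIcc_of_le zero_le_one] at ht
  simp only [logSqProduct, Complex.ofReal_div, Complex.ofReal_mul, Complex.ofReal_pow,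
    Complex.ofReal_log ht.1, Complex.ofReal_log (sub_nonneg.mpr ht.2), Complex.ofReal_sub,
    Complex.ofReal_one]

-- The inner arc leads from `0` to `exp (i π / 3)`, the outer one from `1` to `exp (i π / 3)`.
theorem integral_logSqProduct_eq_sub :
    ∫ t in (0 : ℝ)..1, logSqProduct t =
      (∫ x in 0..π / 6, innerArcIntegrand x) - ∫ x in 0..π / 6, outerArcIntegrand x := by
  obtain ⟨g, hg⟩ := exists_integral_logSqProduct_comp_mul
  have hπ := pi_pos
  have segment := hg zero_le_one Complex.continuous_ofReal continuous_const
    (fun _ ↦ ofReal_mem_arcDisc) fun t ↦ (hasDerivAt_id t).ofReal_comp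
  have inner := hg (a := 0) (b := π / 6) (by positivity) (by fun_prop) (by fun_prop)
    (fun x hx ↦ one_sub_cis_neg_two_mul_mem_arcDisc hx.1 (by linarith [hx.2]))
    hasDerivAt_one_sub_cis_neg_two_mul
  have outer := hg (a := 0) (b := π / 6) (by positivity) (by fun_prop) (by fun_prop)
    (fun x hx ↦ cis_two_mul_mem_arcDisc hx.1 (by linarith [hx.2])) hasDerivAt_cis_two_mul
  have cis_zero : cis 0 = 1 := by simp [cis]
  simp only [Complex.ofReal_one, mul_one, Complex.ofReal_zero] at segment
  rw [one_sub_cis_neg_pi_div_three, mul_zero, cis_zero, sub_self] at inner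
  rw [mul_zero, cis_zero] at outer
  rw [segment]
  unfold innerArcIntegrand outerArcIntegrand
  rw [inner, outer]
  ring

theorem two_mul_I_mul_cis_div_one_sub_cis {x : ℝ} (hx : sin x ≠ 0) :
    2 * Complex.I * cis (-2 * x) / (1 - cis (-2 * x)) = cot x - Complex.I := by
  have hsin : (sin x : ℂ) ≠ 0 := Complex.ofReal_ne_zero.mpr hx
  have hcis : cis (-2 * x) = cos x ^ 2 - sin x ^ 2 - 2 * sin x * cos x * Complex.I := by
    rw [cis_eq, neg_mul, cos_neg, sin_neg, cos_two_mul', sin_two_mul]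
    push_cast
    ring
  have hne : 1 - cis (-2 * x) ≠ 0 := by
    rw [one_sub_cis_neg_two_mul, Complex.ofReal_mul]
    exact mul_ne_zero (mul_ne_zero two_ne_zero hsin) (cis_ne_zero _)
  have hcs : (sin x : ℂ) ^ 2 + cos x ^ 2 = 1 := mod_cast sin_sq_add_cos_sq x
  rw [div_eq_iff hne, hcis, cot_eq_cos_div_sin, Complex.ofReal_div]
  generalize (sin x : ℂ) = s at *
  generalize (cos x : ℂ) = c at *
  field_simp
  grind [Complex.I_sq]

theorem innerArcIntegrand_re {x : ℝ} (hx₀ : 0 < x) (hx₁ : x < π / 2) :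
    (innerArcIntegrand x).re = 4 * (x ^ 2 * (π / 2 - x) ^ 2 * cot x) -
      4 * (x ^ 2 * logTwoSin x ^ 2 * cot x) - 8 * (x ^ 2 * (π / 2 - x) * logTwoSin x) := by
  have hsin : sin x ≠ 0 := (sin_pos_of_pos_of_lt_pi hx₀ (by linarith)).ne'
  rw [innerArcIntegrand, logSqProduct, sub_sub_cancel, log_cis (by linarith) (by linarith),
    log_one_sub_cis_neg_two_mul hx₀ (by linarith), ← mul_div_right_comm,
    mul_div_assoc, two_mul_I_mul_cis_div_one_sub_cis hsin]
  have heq : (logTwoSin x + (π / 2 - x : ℝ) * Complex.I) ^ 2 * ((-2 * x : ℝ) * Complex.I) ^ 2 *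
      (cot x - Complex.I) =
      (4 * (x ^ 2 * (π / 2 - x) ^ 2 * cot x) - 4 * (x ^ 2 * logTwoSin x ^ 2 * cot x) -
        8 * (x ^ 2 * (π / 2 - x) * logTwoSin x) : ℝ) +
      (4 * x ^ 2 * (logTwoSin x ^ 2 - (π / 2 - x) ^ 2 - 2 * (π / 2 - x) * logTwoSin x * cot x) : ℝ)
        * Complex.I := by
    push_cast
    grind [Complex.I_sq]
  rw [heq, Complex.add_re, Complex.ofReal_re, Complex.re_ofReal_mul, Complex.I_re, mul_zero,
    add_zero]

theorem outerArcIntegrand_re {x : ℝ} (hx₀ : 0 < x) (hx₁ : x ≤ π / 2) :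
    (outerArcIntegrand x).re = -16 * (x ^ 2 * (π / 2 - x) * logTwoSin x) := by
  rw [outerArcIntegrand, logSqProduct, log_cis (by linarith) (by linarith),
    log_one_sub_cis_two_mul hx₀ (by linarith)]
  have heq : ((2 * x : ℝ) * Complex.I) ^ 2 * (logTwoSin x - (π / 2 - x : ℝ) * Complex.I) ^ 2 /
      cis (2 * x) * (2 * Complex.I * cis (2 * x)) =
      (-16 * (x ^ 2 * (π / 2 - x) * logTwoSin x) : ℝ) +
        (-8 * (x ^ 2 * (logTwoSin x ^ 2 - (π / 2 - x) ^ 2)) : ℝ) * Complex.I := by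
    have := cis_ne_zero (2 * x)
    push_cast
    field_simp
    grind [Complex.I_sq]
  rw [heq, Complex.add_re, Complex.ofReal_re, Complex.re_ofReal_mul, Complex.I_re, mul_zero,
    add_zero]

theorem intervalIntegrable_sq_mul_sub_mul_logTwoSin (a b : ℝ) :
    IntervalIntegrable (fun x ↦ x ^ 2 * (π / 2 - x) * logTwoSin x) volume a b :=
  (intervalIntegrable_logTwoSin a b).continuousOn_mul (by fun_prop)

theorem intervalIntegrable_sq_mul_sub_sq_mul_cot :
    IntervalIntegrable (fun x ↦ x ^ 2 * (π / 2 - x) ^ 2 * cot x) volume 0 (π / 6) := by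
  have h := intervalIntegrable_mul_mul_cot (f := fun x ↦ x * (π / 2 - x) ^ 2) (by fun_prop)
    (by positivity : 0 ≤ π / 6) (by linarith [pi_pos])
  exact h.congr fun x _ ↦ by ring

theorem innerArcIntegrand_re_eqOn :
    Set.EqOn (fun x ↦ x ^ 2 * logTwoSin x ^ 2 * cot x) (fun x ↦ x ^ 2 * (π / 2 - x) ^ 2 * cot x -
      1 / 4 * (innerArcIntegrand x).re - 2 * (x ^ 2 * (π / 2 - x) * logTwoSin x))
      (Set.uIoc 0 (π / 6)) := fun x hx ↦ by
  rw [Set.uIoc_of_le (by positivity)] at hx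
  simp only [innerArcIntegrand_re hx.1 (by linarith [hx.2, pi_pos])]
  ring

theorem intervalIntegrable_innerArcIntegrand_re :
    IntervalIntegrable (fun x ↦ (innerArcIntegrand x).re) volume 0 (π / 6) :=
  ⟨intervalIntegrable_innerArcIntegrand.1.re, intervalIntegrable_innerArcIntegrand.2.re⟩

theorem intervalIntegrable_sq_mul_logTwoSin_sq_mul_cot :
    IntervalIntegrable (fun x ↦ x ^ 2 * logTwoSin x ^ 2 * cot x) volume 0 (π / 6) :=
  ((intervalIntegrable_sq_mul_sub_sq_mul_cot.sub
    (intervalIntegrable_innerArcIntegrand_re.const_mul (1 / 4))).sub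
      ((intervalIntegrable_sq_mul_sub_mul_logTwoSin _ _).const_mul 2)).congr
        innerArcIntegrand_re_eqOn.symm

theorem integral_sq_mul_logTwoSin_sq_mul_cot :
    ∫ x in 0..π / 6, x ^ 2 * logTwoSin x ^ 2 * cot x =
      (∫ x in 0..π / 6, x ^ 2 * (π / 2 - x) ^ 2 * cot x) +
        2 * (∫ x in 0..π / 6, x ^ 2 * (π / 2 - x) * logTwoSin x) -
        (8 * zeta 5 - 2 / 3 * π ^ 2 * zeta 3) / 4 := by
  have hle : 0 ≤ π / 6 := by positivity
  have hcontour := congrArg Complex.reCLM integral_logSqProduct_eq_sub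
  rw [integral_logSqProduct, map_sub,
    ← Complex.reCLM.intervalIntegral_comp_comm intervalIntegrable_innerArcIntegrand,
    ← Complex.reCLM.intervalIntegral_comp_comm intervalIntegrable_outerArcIntegrand] at hcontour
  simp only [Complex.reCLM_apply, Complex.ofReal_re] at hcontour
  have houter : ∫ x in 0..π / 6, (outerArcIntegrand x).re =
      -16 * ∫ x in 0..π / 6, x ^ 2 * (π / 2 - x) * logTwoSin x := by
    rw [← intervalIntegral.integral_const_mul]
    refine intervalIntegral.integral_congr_ae (.of_forall fun x hx ↦ ?_)
    rw [Set.uIoc_of_le hle] at hx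
    exact outerArcIntegrand_re hx.1 (by linarith [hx.2, pi_pos])
  rw [intervalIntegral.integral_congr_ae (.of_forall innerArcIntegrand_re_eqOn),
    intervalIntegral.integral_sub (intervalIntegrable_sq_mul_sub_sq_mul_cot.sub
      (intervalIntegrable_innerArcIntegrand_re.const_mul _))
      ((intervalIntegrable_sq_mul_sub_mul_logTwoSin _ _).const_mul _),
    intervalIntegral.integral_sub intervalIntegrable_sq_mul_sub_sq_mul_cot
      (intervalIntegrable_innerArcIntegrand_re.const_mul _),
    intervalIntegral.integral_const_mul, intervalIntegral.integral_const_mul]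
  linarith

end Contour

section LogKernel

theorem integral_pow_mul_sub_pow (s : ℝ) (a m : ℕ) :
    ∫ v in (0 : ℝ)..s, v ^ a * (s - v) ^ m =
      a.factorial * m.factorial / (a + m + 1).factorial * s ^ (a + m + 1) := by
  induction m generalizing a with
  | zero =>
    simp only [pow_zero, mul_one, integral_pow, add_zero, Nat.factorial_zero, Nat.cast_one,
      Nat.factorial_succ, ne_eq, Nat.succ_ne_zero, not_false_eq_true, zero_pow, sub_zero]
    push_cast
    field_simp
  | succ m ih =>
    have hderiv (v : ℝ) : HasDerivAt (fun v ↦ v ^ (a + 1) * (s - v) ^ (m + 1))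
        ((a + 1) * (v ^ a * (s - v) ^ (m + 1)) - (m + 1) * (v ^ (a + 1) * (s - v) ^ m)) v :=
      ((hasDerivAt_pow (a + 1) v).fun_mul
        (((hasDerivAt_id' v).const_sub s).fun_pow (m + 1))).congr_deriv
          (by push_cast; simp only [mul_neg, mul_one]; ring)
    have hparts := intervalIntegral.integral_eq_sub_of_hasDerivAt (a := 0) (b := s)
      (fun v _ ↦ hderiv v) (Continuous.intervalIntegrable (by fun_prop) _ _)
    rw [intervalIntegral.integral_sub (Continuous.intervalIntegrable (by fun_prop) _ _)
      (Continuous.intervalIntegrable (by fun_prop) _ _), intervalIntegral.integral_const_mul,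
      intervalIntegral.integral_const_mul, ih, sub_self, zero_pow (by lia), zero_pow (by lia),
      mul_zero, zero_mul, sub_zero, sub_eq_zero] at hparts
    refine mul_left_cancel₀ (by positivity : (a : ℝ) + 1 ≠ 0) (hparts.trans ?_)
    rw [show a + 1 + m + 1 = a + (m + 1) + 1 by ring, Nat.factorial_succ a, Nat.factorial_succ m]
    push_cast
    ring

theorem integral_pow_mul_log (n : ℕ) :
    ∫ x in (0 : ℝ)..1, x ^ n * log x = -(1 / ((n : ℝ) + 1) ^ 2) := by
  have hcont : Continuous fun x ↦
      x ^ n * (x * log x) / ((n : ℝ) + 1) - x ^ (n + 1) / ((n : ℝ) + 1) ^ 2 := by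
    fun_prop
  rw [intervalIntegral.integral_eq_sub_of_hasDerivAt_of_le zero_le_one hcont.continuousOn
    (fun x hx ↦ ?_)
    (intervalIntegral.intervalIntegrable_log'.continuousOn_mul (by fun_prop))]
  · simp
  · have hx₀ : x ≠ 0 := hx.1.ne'
    have h := (((hasDerivAt_pow (n + 1) x).fun_mul (hasDerivAt_log hx₀)).div_const
      ((n : ℝ) + 1)).fun_sub ((hasDerivAt_pow (n + 1) x).div_const (((n : ℝ) + 1) ^ 2))
    refine (h.congr_of_eventuallyEq (.of_forall fun y ↦ ?_)).congr_deriv ?_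
    · dsimp only
      ring
    · push_cast
      field_simp
      ring

theorem setIntegral_prod_eq_integral_section {α β : Type*} [MeasurableSpace α]
    [MeasurableSpace β] {μ : Measure α} {ν : Measure β} [SFinite μ] [SFinite ν]
    {T : Set (α × β)} (hT : MeasurableSet T) {f : α × β → ℝ} (hf : IntegrableOn f T (μ.prod ν)) :
    ∫ p in T, f p ∂μ.prod ν = ∫ x, ∫ y in Prod.mk x ⁻¹' T, f (x, y) ∂ν ∂μ := by
  rw [← integral_indicator hT, integral_prod _ ((integrable_indicator_iff hT).mpr hf)]
  refine integral_congr_ae (.of_forall fun x ↦ ?_)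
  exact integral_indicator (f := fun y ↦ f (x, y)) (measurable_prodMk_left hT)

/-- The triangle `0 < v < s < 1`, with `v` the first coordinate. -/
def unitTriangle : Set (ℝ × ℝ) := {p | 0 < p.1 ∧ p.1 < p.2 ∧ p.2 < 1}

theorem measurableSet_unitTriangle : MeasurableSet unitTriangle :=
  (measurableSet_lt measurable_const measurable_fst).inter
    ((measurableSet_lt measurable_fst measurable_snd).inter
      (measurableSet_lt measurable_snd measurable_const))

theorem setIntegral_unitTriangle {f : ℝ × ℝ → ℝ} (hf : IntegrableOn f unitTriangle) :
    ∫ p in unitTriangle, f p = ∫ v in (0 : ℝ)..1, ∫ s in v..1, f (v, s) := by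
  rw [Measure.volume_eq_prod, setIntegral_prod_eq_integral_section measurableSet_unitTriangle hf,
    intervalIntegral.integral_of_le zero_le_one, integral_Ioc_eq_integral_Ioo,
    ← setIntegral_eq_integral_of_forall_compl_eq_zero (s := Set.Ioo 0 1) fun v hv ↦ ?_]
  · refine setIntegral_congr_fun measurableSet_Ioo fun v hv ↦ ?_
    rw [intervalIntegral.integral_of_le hv.2.le, integral_Ioc_eq_integral_Ioo]
    congr 2
    ext s
    simp [unitTriangle, hv.1]
  · have : Prod.mk v ⁻¹' unitTriangle = ∅ := by
      ext s
      simp only [unitTriangle, Set.mem_preimage, Set.mem_ofPred_eq, Set.mem_empty_iff_false,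
        iff_false]
      exact fun h ↦ hv ⟨h.1, h.2.1.trans h.2.2⟩
    rw [this, setIntegral_empty]

theorem setIntegral_unitTriangle_symm {f : ℝ × ℝ → ℝ} (hf : IntegrableOn f unitTriangle) :
    ∫ p in unitTriangle, f p = ∫ s in (0 : ℝ)..1, ∫ v in 0..s, f (v, s) := by
  have hT : MeasurableSet (Prod.swap ⁻¹' unitTriangle) :=
    measurable_swap measurableSet_unitTriangle
  have hswap := Measure.measurePreserving_swap (μ := (volume : Measure ℝ))
    (ν := (volume : Measure ℝ))
  have hemb : MeasurableEmbedding (Prod.swap : ℝ × ℝ → ℝ × ℝ) :=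
    MeasurableEquiv.prodComm.measurableEmbedding
  rw [Measure.volume_eq_prod, ← hswap.setIntegral_preimage_emb hemb,
    setIntegral_prod_eq_integral_section (f := fun p ↦ f p.swap) hT
      ((hswap.integrableOn_comp_preimage hemb).mpr hf),
    intervalIntegral.integral_of_le zero_le_one, integral_Ioc_eq_integral_Ioo,
    ← setIntegral_eq_integral_of_forall_compl_eq_zero (s := Set.Ioo 0 1) fun s hs ↦ ?_]
  · refine setIntegral_congr_fun measurableSet_Ioo fun s hs ↦ ?_
    rw [intervalIntegral.integral_of_le hs.1.le, integral_Ioc_eq_integral_Ioo]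
    congr 2
    ext v
    simp [unitTriangle, hs.2]
  · have : Prod.mk s ⁻¹' (Prod.swap ⁻¹' unitTriangle) = ∅ := by
      ext v
      simp only [unitTriangle, Set.mem_preimage, Prod.swap_prod_mk, Set.mem_ofPred_eq,
        Set.mem_empty_iff_false, iff_false]
      exact fun h ↦ hs ⟨h.1.trans h.2.1, h.2.2⟩
    rw [this, setIntegral_empty]

theorem integrableOn_unitTriangle_of_norm_le {f : ℝ × ℝ → ℝ} (hf : Measurable f) (C : ℝ)
    (hbound : ∀ p ∈ unitTriangle, ‖f p‖ ≤ C * -log p.2) : IntegrableOn f unitTriangle := by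
  have hlog : IntegrableOn log (Set.Ioo 0 1) :=
    (intervalIntegrable_iff_integrableOn_Ioo_of_le zero_le_one).mp
      intervalIntegral.intervalIntegrable_log'
  have hsquare : IntegrableOn (fun p : ℝ × ℝ ↦ C * -log p.2) (Set.Ioo 0 1 ×ˢ Set.Ioo 0 1) := by
    rw [IntegrableOn, Measure.volume_eq_prod, ← Measure.prod_restrict]
    exact (hlog.neg.comp_snd (volume.restrict (Set.Ioo 0 1))).const_mul C
  have hsubset : unitTriangle ⊆ Set.Ioo 0 1 ×ˢ Set.Ioo 0 1 := fun p ⟨hv, hvs, hs⟩ ↦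
    ⟨⟨hv, hvs.trans hs⟩, ⟨hv.trans hvs, hs⟩⟩
  refine (hsquare.mono_set hsubset).mono' hf.aestronglyMeasurable ?_
  exact (ae_restrict_mem measurableSet_unitTriangle).mono hbound

/-- The integrand on `unitTriangle` representing one term of `aperyDouble`, up to sign and a factor
depending on `k` only. -/
noncomputable def triangleMonomial (k m : ℕ) (p : ℝ × ℝ) : ℝ :=
  p.1 ^ (2 * k + 1) * ((p.2 - p.1) * p.2) ^ m * (-log p.2 / p.2)

theorem neg_log_nonneg_of_mem_unitTriangle {p : ℝ × ℝ} (hp : p ∈ unitTriangle) :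
    0 ≤ -log p.2 :=
  neg_nonneg.mpr (log_nonpos (hp.1.trans hp.2.1).le hp.2.2.le)

theorem mul_mem_Ico_of_mem_unitTriangle {p : ℝ × ℝ} (hp : p ∈ unitTriangle) :
    (p.2 - p.1) * p.2 ∈ Set.Ico 0 1 := by
  obtain ⟨hv, hvs, hs⟩ := hp
  exact ⟨mul_nonneg (by linarith) (by linarith), by nlinarith⟩

theorem triangleMonomial_nonneg (k m : ℕ) {p : ℝ × ℝ} (hp : p ∈ unitTriangle) :
    0 ≤ triangleMonomial k m p := by
  have := neg_log_nonneg_of_mem_unitTriangle hp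
  have := (mul_mem_Ico_of_mem_unitTriangle hp).1
  have hv := hp.1
  have hs := hv.trans hp.2.1
  unfold triangleMonomial
  positivity

theorem integrableOn_triangleMonomial (k m : ℕ) :
    IntegrableOn (triangleMonomial k m) unitTriangle := by
  refine integrableOn_unitTriangle_of_norm_le ?_ 1 fun p hp ↦ ?_
  · have := measurable_log
    unfold triangleMonomial
    fun_prop
  have hlog := neg_log_nonneg_of_mem_unitTriangle hp
  have hpow : ((p.2 - p.1) * p.2) ^ m ≤ 1 :=
    pow_le_one₀ (mul_mem_Ico_of_mem_unitTriangle hp).1 (mul_mem_Ico_of_mem_unitTriangle hp).2.le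
  rw [norm_of_nonneg (triangleMonomial_nonneg k m hp)]
  obtain ⟨hv, hvs, hs⟩ := hp
  have hs₀ := hv.trans hvs
  have hvpow : p.1 ^ (2 * k + 1) ≤ p.2 := by
    rw [pow_succ]
    exact (mul_le_of_le_one_left hv.le (pow_le_one₀ hv.le (hvs.trans hs).le)).trans hvs.le
  calc triangleMonomial k m p ≤ p.2 * 1 * (-log p.2 / p.2) := by
        unfold triangleMonomial; gcongr
    _ = 1 * -log p.2 := by field_simp

theorem setIntegral_triangleMonomial (k m : ℕ) :
    ∫ p in unitTriangle, triangleMonomial k m p =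
      (2 * k + 1).factorial * m.factorial / (2 * k + m + 2).factorial /
        (2 * ((k : ℝ) + m + 1)) ^ 2 := by
  have hinner (s : ℝ) : ∫ v in 0..s, triangleMonomial k m (v, s) =
      -((2 * k + 1).factorial * m.factorial / (2 * k + m + 2).factorial) *
        (s ^ (2 * k + 2 * m + 1) * log s) := by
    simp only [triangleMonomial, mul_pow, ← mul_assoc]
    rw [intervalIntegral.integral_mul_const, intervalIntegral.integral_mul_const,
      integral_pow_mul_sub_pow, show 2 * k + 1 + m + 1 = 2 * k + m + 2 by ring]
    rcases eq_or_ne s 0 with rfl | hs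
    · simp
    · field_simp
      ring
  rw [setIntegral_unitTriangle_symm (integrableOn_triangleMonomial k m)]
  simp_rw [hinner]
  rw [intervalIntegral.integral_const_mul, integral_pow_mul_log]
  push_cast
  ring

theorem aperyKernel_eq_setIntegral (k m : ℕ) :
    aperyKernel (k, m) = 8 / (((k : ℝ) + 1) ^ 2 * (k + 1).centralBinom) *
      ∫ p in unitTriangle, triangleMonomial k m p := by
  have hcentral : ((k + 1).centralBinom : ℝ) * (k + 1).factorial ^ 2 =
      2 * ((k : ℝ) + 1) * (2 * k + 1).factorial := by
    have h := Nat.choose_mul_factorial_mul_factorial (Nat.le_mul_of_pos_left (k + 1) two_pos)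
    rw [← Nat.centralBinom_eq_two_mul_choose, show 2 * (k + 1) - (k + 1) = k + 1 by lia,
      show 2 * (k + 1) = 2 * k + 1 + 1 by ring, Nat.factorial_succ (2 * k + 1)] at h
    rw [sq, ← mul_assoc, ← Nat.cast_mul, ← Nat.cast_mul, h]
    push_cast
    ring
  have hpos : (0 : ℝ) < (k + 1).centralBinom := mod_cast Nat.centralBinom_pos _
  rw [setIntegral_triangleMonomial, aperyKernel,
    show ((2 * k + 1).factorial : ℝ) =
      (k + 1).centralBinom * (k + 1).factorial ^ 2 / (2 * (k + 1)) by rw [hcentral]; field_simp]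
  field_simp
  ring

/-- The `(k, m)` term of the expansion on `unitTriangle` of the integrand whose integral is
`aperyDouble`. -/
noncomputable def triangleTerm (q : ℕ × ℕ) (p : ℝ × ℝ) : ℝ :=
  8 / (((q.1 : ℝ) + 1) ^ 2 * (q.1 + 1).centralBinom) *
    ((-1) ^ q.2 * triangleMonomial q.1 q.2 p)

theorem norm_triangleTerm (q : ℕ × ℕ) {p : ℝ × ℝ} (hp : p ∈ unitTriangle) :
    ‖triangleTerm q p‖ = 8 / (((q.1 : ℝ) + 1) ^ 2 * (q.1 + 1).centralBinom) *
      triangleMonomial q.1 q.2 p := by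
  rw [triangleTerm, norm_mul, norm_mul, norm_pow, norm_neg, norm_one, one_pow, one_mul,
    norm_of_nonneg (triangleMonomial_nonneg _ _ hp), norm_of_nonneg (by positivity)]

theorem hasSum_triangleTerm {p : ℝ × ℝ} (hp : p ∈ unitTriangle) :
    HasSum (fun q ↦ triangleTerm q p)
      (16 * arcsin (p.1 / 2) ^ 2 / p.1 * (-log p.2 / (p.2 * (1 - p.1 * p.2 + p.2 ^ 2)))) := by
  have hv := hp.1
  have hs := hv.trans hp.2.1
  obtain ⟨h₀, h₁⟩ := mul_mem_Ico_of_mem_unitTriangle hp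
  have harcsin := (hasSum_two_mul_arcsin_sq ⟨hv.le, (hp.2.1.trans hp.2.2).le⟩).mul_left (8 / p.1)
  have hgeom := (hasSum_geometric_of_abs_lt_one (r := -((p.2 - p.1) * p.2))
    (by rwa [abs_neg, abs_of_nonneg h₀])).mul_right (-log p.2 / p.2)
  have hsummable := (summable_mul_of_summable_norm harcsin.summable.norm hgeom.summable.norm)
  have hvalue : 8 / p.1 * (2 * arcsin (p.1 / 2) ^ 2) *
      ((1 - -((p.2 - p.1) * p.2))⁻¹ * (-log p.2 / p.2)) =
      16 * arcsin (p.1 / 2) ^ 2 / p.1 * (-log p.2 / (p.2 * (1 - p.1 * p.2 + p.2 ^ 2))) := by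
    rw [show 1 - -((p.2 - p.1) * p.2) = 1 - p.1 * p.2 + p.2 ^ 2 by ring]
    field_simp
    ring
  rw [← hvalue]
  refine (harcsin.mul hgeom hsummable).congr_fun fun q ↦ ?_
  rw [triangleTerm, triangleMonomial, neg_pow ((p.2 - p.1) * p.2), mul_add, pow_succ p.1]
  field_simp
  ring

theorem aperyDouble_eq_setIntegral :
    aperyDouble = ∫ p in unitTriangle,
      16 * arcsin (p.1 / 2) ^ 2 / p.1 * (-log p.2 / (p.2 * (1 - p.1 * p.2 + p.2 ^ 2))) := by
  have hnorm (q : ℕ × ℕ) : ∫ p in unitTriangle, ‖triangleTerm q p‖ = aperyKernel q := by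
    rw [aperyKernel_eq_setIntegral q.1 q.2, ← integral_const_mul]
    exact setIntegral_congr_fun measurableSet_unitTriangle fun p hp ↦ norm_triangleTerm q hp
  have hvalue (q : ℕ × ℕ) :
      ∫ p in unitTriangle, triangleTerm q p = (-1) ^ q.2 * aperyKernel q := by
    unfold triangleTerm
    rw [integral_const_mul, integral_const_mul, aperyKernel_eq_setIntegral q.1 q.2]
    ring
  have hint (q : ℕ × ℕ) : IntegrableOn (triangleTerm q) unitTriangle :=
    ((integrableOn_triangleMonomial q.1 q.2).const_mul _).const_mul _
  have h := hasSum_integral_of_summable_integral_norm hint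
    (summable_aperyKernel.congr fun q ↦ (hnorm q).symm)
  rw [hasSum_aperyDouble.unique (h.congr_fun fun q ↦ (hvalue q).symm)]
  exact setIntegral_congr_fun measurableSet_unitTriangle fun p hp ↦ (hasSum_triangleTerm hp).tsum_eq

theorem integrableOn_unitTriangle_arcsin_sq_mul :
    IntegrableOn (fun p : ℝ × ℝ ↦
      16 * arcsin (p.1 / 2) ^ 2 / p.1 * (-log p.2 / (p.2 * (1 - p.1 * p.2 + p.2 ^ 2))))
      unitTriangle := by
  refine integrableOn_unitTriangle_of_norm_le ?_ (π ^ 2) fun p hp ↦ ?_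
  · have := measurable_log
    have := measurable_arcsin
    fun_prop
  obtain ⟨h₀, -⟩ := mul_mem_Ico_of_mem_unitTriangle hp
  have hlog := neg_log_nonneg_of_mem_unitTriangle hp
  obtain ⟨hv, hvs, hs⟩ := hp
  have hs₀ := hv.trans hvs
  have harcsin₀ : 0 ≤ arcsin (p.1 / 2) := arcsin_nonneg.mpr (by positivity)
  have harcsin : arcsin (p.1 / 2) ≤ π / 4 * p.1 := by
    have h := mul_le_sin harcsin₀ (arcsin_le_pi_div_two _)
    rw [sin_arcsin (by linarith) (by linarith), div_mul_eq_mul_div, div_le_iff₀ pi_pos] at h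
    linarith
  have hden : p.2 ≤ p.2 * (1 - p.1 * p.2 + p.2 ^ 2) :=
    le_mul_of_one_le_right hs₀.le (by linarith)
  have hden₀ := hs₀.trans_le hden
  rw [norm_of_nonneg (by positivity)]
  calc _ ≤ 16 * (π / 4 * p.1) ^ 2 / p.1 * (-log p.2 / p.2) := by gcongr
    _ = π ^ 2 * -log p.2 * (p.1 / p.2) := by field_simp; ring
    _ ≤ π ^ 2 * -log p.2 :=
      mul_le_of_le_one_right (by positivity) ((div_le_one hs₀).mpr hvs.le)

/-- The integral over `v < s < 1` left after summing `triangleMonomial k m` over `m`. -/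
noncomputable def logKernel (v : ℝ) : ℝ :=
  ∫ s in v..1, -log s / (s * (1 - v * s + s ^ 2))

theorem aperyDouble_eq_integral_logKernel :
    aperyDouble = ∫ x in 0..π / 6, 16 * x ^ 2 * cot x * logKernel (2 * sin x) := by
  have harcsin : aperyDouble = ∫ v in (0 : ℝ)..1, 16 * arcsin (v / 2) ^ 2 / v * logKernel v := by
    rw [aperyDouble_eq_setIntegral,
      setIntegral_unitTriangle integrableOn_unitTriangle_arcsin_sq_mul]
    simp only [intervalIntegral.integral_const_mul, logKernel]
  rw [harcsin, ← integral_comp_two_mul_sin]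
  refine intervalIntegral.integral_congr fun x hx ↦ ?_
  rw [Set.uIcc_of_le (by positivity)] at hx
  rw [mul_div_cancel_left₀ _ two_ne_zero,
    arcsin_sin (by linarith [hx.1, pi_pos]) (by linarith [hx.2, pi_pos]), cot_eq_cos_div_sin]
  field_simp

end LogKernel

section SegmentPrimitive

theorem exists_hasDerivAt_neg_log_div_one_sub :
    ∃ D : ℂ → ℂ, ∀ w ∈ arcDisc, HasDerivAt D (-Complex.log w / (1 - w)) w := by
  refine DifferentiableOn.isExactOn_ball fun w hw ↦ ?_
  exact (((Complex.differentiableAt_log (mem_slitPlane_of_mem_arcDisc hw)).neg).div (by fun_prop)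
    (Complex.slitPlane_ne_zero (one_sub_mem_slitPlane_of_mem_arcDisc hw))).differentiableWithinAt

/-- For `D` a primitive of `-log w / (1 - w)`, a primitive in `s` of `-log s / (ρ⁻¹ - s)`, where
`ρ = exp (i (π / 2 - x))`. -/
noncomputable def segmentPrimitive (D : ℂ → ℂ) (x s : ℝ) : ℂ :=
  D (s * cis (π / 2 - x)) -
    (π / 2 - x : ℝ) * Complex.I * Complex.log (1 - s * cis (π / 2 - x))

theorem cis_pi_div_two_sub (x : ℝ) : cis (π / 2 - x) = sin x + cos x * Complex.I := by
  rw [cis_eq, cos_pi_div_two_sub, sin_pi_div_two_sub]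

theorem ofReal_mul_cis_mem_arcDisc {x s : ℝ} (hx₀ : 0 < x) (hx₁ : x < π / 2)
    (hs₀ : 0 < s) (hs₁ : s ≤ 1) : s * cis (π / 2 - x) ∈ arcDisc := by
  have hsin := sin_pos_of_pos_of_lt_pi hx₀ (by linarith)
  have hcos := cos_pos_of_mem_Ioo ⟨by linarith, hx₁⟩
  have hsum : 1 < sin x + 2 * cos x := by
    nlinarith [sin_sq_add_cos_sq x, sin_le_one x, cos_le_one x]
  rw [mem_arcDisc, Complex.re_ofReal_mul, Complex.im_ofReal_mul, cis_re, cis_im, mul_pow, mul_pow,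
    ← mul_add, cos_sq_add_sin_sq, cos_pi_div_two_sub, sin_pi_div_two_sub]
  nlinarith

theorem one_sub_two_mul_sin_mul_add_sq_pos {x : ℝ} (hx₀ : 0 < x) (hx₁ : x < π / 2) (s : ℝ) :
    0 < 1 - 2 * sin x * s + s ^ 2 := by
  have hcos := cos_pos_of_mem_Ioo ⟨by linarith, hx₁⟩
  nlinarith [sin_sq_add_cos_sq x, sq_nonneg (s - sin x)]

variable {D : ℂ → ℂ} (hD : ∀ w ∈ arcDisc, HasDerivAt D (-Complex.log w / (1 - w)) w)
include hD

theorem hasDerivAt_segmentPrimitive {x s : ℝ} (hx₀ : 0 < x) (hx₁ : x < π / 2)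
    (hs₀ : 0 < s) (hs₁ : s ≤ 1) :
    HasDerivAt (segmentPrimitive D x)
      ((-log s / (1 - 2 * sin x * s + s ^ 2) : ℝ) * ((sin x - s) + cos x * Complex.I)) s := by
  have hmem := ofReal_mul_cis_mem_arcDisc hx₀ hx₁ hs₀ hs₁
  have hslit := one_sub_mem_slitPlane_of_mem_arcDisc hmem
  have hray : HasDerivAt (fun s : ℝ ↦ s * cis (π / 2 - x)) (cis (π / 2 - x)) s :=
    ((hasDerivAt_id' s).ofReal_comp.mul_const _).congr_deriv (by simp)
  have h := ((hD _ hmem).comp s hray).sub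
    (((hray.const_sub 1).clog_real hslit).const_mul ((π / 2 - x : ℝ) * Complex.I))
  refine (h.congr_of_eventuallyEq (.of_forall fun _ ↦ rfl)).congr_deriv ?_
  rw [Complex.log_ofReal_mul hs₀ (cis_ne_zero _), log_cis (by linarith) (by linarith)]
  have hne := Complex.slitPlane_ne_zero hslit
  have hden : (1 - 2 * sin x * s + s ^ 2 : ℂ) ≠ 0 :=
    mod_cast (one_sub_two_mul_sin_mul_add_sq_pos hx₀ hx₁ s).ne'
  have hcs : (sin x : ℂ) ^ 2 + cos x ^ 2 = 1 := mod_cast sin_sq_add_cos_sq x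
  have hcis : cis (π / 2 - x) * (1 - 2 * sin x * s + s ^ 2) =
      (1 - s * cis (π / 2 - x)) * (sin x - s + cos x * Complex.I) := by
    rw [cis_pi_div_two_sub]
    grind [Complex.I_sq]
  have hquot : cis (π / 2 - x) / (1 - s * cis (π / 2 - x)) =
      (sin x - s + cos x * Complex.I) / (1 - 2 * sin x * s + s ^ 2) := by
    rw [div_eq_div_iff hne hden, hcis, mul_comm]
  calc -(log s + (π / 2 - x : ℝ) * Complex.I) / (1 - s * cis (π / 2 - x)) * cis (π / 2 - x) -
        (π / 2 - x : ℝ) * Complex.I * (-cis (π / 2 - x) / (1 - s * cis (π / 2 - x)))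
    _ = -log s * (cis (π / 2 - x) / (1 - s * cis (π / 2 - x))) := by ring
    _ = _ := by
      rw [hquot]
      push_cast [-Complex.ofReal_sin, -Complex.ofReal_cos]
      ring

theorem hasDerivAt_re_segmentPrimitive_add {x s : ℝ} (hx₀ : 0 < x) (hx₁ : x < π / 2)
    (hs₀ : 0 < s) (hs₁ : s ≤ 1) :
    HasDerivAt (fun s ↦ -(log s ^ 2 / 2) + (segmentPrimitive D x s).re +
      tan x * (segmentPrimitive D x s).im) (-log s / (s * (1 - 2 * sin x * s + s ^ 2))) s := by
  have hF := hasDerivAt_segmentPrimitive hD hx₀ hx₁ hs₀ hs₁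
  have hre := Complex.reCLM.hasFDerivAt.comp_hasDerivAt s hF
  have him := Complex.imCLM.hasFDerivAt.comp_hasDerivAt s hF
  have hlog := ((hasDerivAt_log hs₀.ne').fun_pow 2).div_const 2
  refine ((hlog.fun_neg.fun_add hre).fun_add (him.const_mul (tan x))).congr_deriv ?_
  have hcos := (cos_pos_of_mem_Ioo (x := x) ⟨by linarith, hx₁⟩).ne'
  have hne := (one_sub_two_mul_sin_mul_add_sq_pos hx₀ hx₁ s).ne'
  simp only [Complex.reCLM_apply, Complex.imCLM_apply, Complex.re_ofReal_mul,
    Complex.im_ofReal_mul, Complex.add_re, Complex.add_im, Complex.sub_re, Complex.sub_im,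
    Complex.ofReal_re, Complex.ofReal_im, Complex.I_re, Complex.I_im, tan_eq_sin_div_cos]
  generalize hq : 1 - 2 * sin x * s + s ^ 2 = q at hne ⊢
  field_simp
  rw [← hq]
  ring

theorem hasDerivAt_segmentPrimitive_one {x : ℝ} (hx₀ : 0 < x) (hx₁ : x < π / 2) :
    HasDerivAt (fun x ↦ segmentPrimitive D x 1) (Complex.I * Complex.log (1 - cis (π / 2 - x)))
      x := by
  have hmem := ofReal_mul_cis_mem_arcDisc hx₀ hx₁ one_pos le_rfl
  rw [Complex.ofReal_one, one_mul] at hmem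
  have hslit := one_sub_mem_slitPlane_of_mem_arcDisc hmem
  have harc : HasDerivAt (fun x ↦ cis (π / 2 - x)) (-(cis (π / 2 - x) * Complex.I)) x :=
    ((hasDerivAt_cis (π / 2 - x)).scomp x ((hasDerivAt_id' x).const_sub (π / 2))).congr_deriv
      (by simp)
  have hcoeff : HasDerivAt (fun x : ℝ ↦ (π / 2 - x : ℝ) * Complex.I) (-Complex.I) x :=
    (((hasDerivAt_id' x).const_sub (π / 2)).ofReal_comp.mul_const Complex.I).congr_deriv (by simp)
  have h := ((hD _ hmem).comp x harc).sub (hcoeff.fun_mul ((harc.const_sub 1).clog_real hslit))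
  refine (h.congr_of_eventuallyEq (.of_forall fun y ↦ ?_)).congr_deriv ?_
  · simp [segmentPrimitive]
  · rw [log_cis (by linarith) (by linarith)]
    field_simp
    grind [Complex.I_sq]

theorem hasDerivAt_segmentPrimitive_two_mul_sin {x : ℝ} (hx₀ : 0 < x) (hx₁ : x < π / 4) :
    HasDerivAt (fun x ↦ segmentPrimitive D x (2 * sin x))
      (-2 * Complex.I * Complex.log (1 - cis (-2 * x)) + (4 * x - π : ℝ)) x := by
  have hmem := one_sub_cis_neg_two_mul_mem_arcDisc hx₀ hx₁.le
  have hpoly : HasDerivAt (fun x : ℝ ↦ (2 * x * (π / 2 - x) : ℝ)) (π - 4 * x) x :=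
    (((hasDerivAt_id' x).const_mul 2).fun_mul ((hasDerivAt_id' x).const_sub (π / 2))).congr_deriv
      (by ring)
  have h := ((hD _ hmem).comp x (hasDerivAt_one_sub_cis_neg_two_mul x)).sub hpoly.ofReal_comp
  refine (h.congr_of_eventuallyEq ?_).congr_deriv ?_
  · filter_upwards [Ioo_mem_nhds hx₀ hx₁] with y hy
    rw [segmentPrimitive, ← one_sub_cis_neg_two_mul, sub_sub_cancel,
      log_cis (by linarith [hy.2]) (by linarith [hy.1, pi_pos])]
    simp only [Pi.sub_apply, Function.comp_apply]
    push_cast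
    grind [Complex.I_sq]
  · have := cis_ne_zero (-2 * x)
    generalize cis (-2 * x) = u at *
    rw [sub_sub_cancel]
    push_cast
    field_simp
    ring

end SegmentPrimitive

section KernelClosedForm

/-- The derivative in `x` of the imaginary part of `s ↦ segmentPrimitive D x s` across
`[2 * sin x, 1]`. -/
noncomputable def logTwoSinPair (x : ℝ) : ℝ := 2 * logTwoSin x + logTwoSin (π / 4 - x / 2)

/-- The primitive of `logTwoSinPair` vanishing at `π / 6`, where `2 * sin x = 1`. -/
noncomputable def pairPrimitive (x : ℝ) : ℝ := ∫ t in π / 6..x, logTwoSinPair t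

theorem intervalIntegrable_logTwoSin_comp (a b : ℝ) :
    IntervalIntegrable (fun x ↦ logTwoSin (π / 4 - x / 2)) volume a b := by
  have h := (intervalIntegrable_logTwoSin (π / 4 - a / 2) (π / 4 - b / 2)).comp_sub_left (π / 4)
  have h' := h.comp_mul_left (c := 1 / 2)
  convert h' using 1 <;> ring_nf

theorem intervalIntegrable_logTwoSinPair (a b : ℝ) :
    IntervalIntegrable logTwoSinPair volume a b :=
  ((intervalIntegrable_logTwoSin a b).const_mul 2).add (intervalIntegrable_logTwoSin_comp a b)

theorem pairPrimitive_pi_div_six : pairPrimitive (π / 6) = 0 :=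
  intervalIntegral.integral_same

theorem continuous_pairPrimitive : Continuous pairPrimitive :=
  intervalIntegral.continuous_primitive intervalIntegrable_logTwoSinPair _

theorem hasDerivAt_pairPrimitive {x : ℝ} (hx₀ : 0 < x) (hx₁ : x < π / 2) :
    HasDerivAt pairPrimitive (logTwoSinPair x) x := by
  have hmeas : Measurable logTwoSinPair :=
    (measurable_logTwoSin.const_mul 2).add (measurable_logTwoSin.comp (by fun_prop))
  have hcont : ContinuousAt logTwoSinPair x := by
    refine ((continuousAt_logTwoSin ?_).const_mul 2).add
      (ContinuousAt.comp' (continuousAt_logTwoSin ?_) (by fun_prop))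
    · exact (sin_pos_of_pos_of_lt_pi hx₀ (by linarith)).ne'
    · exact (sin_pos_of_pos_of_lt_pi (by linarith) (by linarith)).ne'
  exact intervalIntegral.integral_hasDerivAt_right (intervalIntegrable_logTwoSinPair _ _)
    hmeas.stronglyMeasurable.stronglyMeasurableAtFilter hcont

section

variable {D : ℂ → ℂ} (hD : ∀ w ∈ arcDisc, HasDerivAt D (-Complex.log w / (1 - w)) w)
include hD

theorem hasDerivAt_segmentPrimitive_one_sub {x : ℝ} (hx₀ : 0 < x) (hx₁ : x < π / 4) :
    HasDerivAt (fun x ↦ segmentPrimitive D x 1 - segmentPrimitive D x (2 * sin x))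
      (((π - 6 * x) / 4 : ℝ) + logTwoSinPair x * Complex.I) x := by
  refine ((hasDerivAt_segmentPrimitive_one hD hx₀ (by linarith)).fun_sub
    (hasDerivAt_segmentPrimitive_two_mul_sin hD hx₀ hx₁)).congr_deriv ?_
  have hlog := log_one_sub_cis_two_mul (x := π / 4 - x / 2) (by linarith) (by linarith [pi_pos])
  rw [show 2 * (π / 4 - x / 2) = π / 2 - x by ring] at hlog
  rw [hlog, neg_mul, ← mul_neg, log_one_sub_cis_neg_two_mul hx₀ (by linarith), logTwoSinPair]
  push_cast
  grind [Complex.I_sq]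

theorem segmentPrimitive_one_sub {x : ℝ} (hx₀ : 0 < x) (hx₁ : x ≤ π / 6) :
    segmentPrimitive D x 1 - segmentPrimitive D x (2 * sin x) =
      (-(π - 6 * x) ^ 2 / 48 : ℝ) + pairPrimitive x * Complex.I := by
  have hpoly (t : ℝ) : HasDerivAt (fun t ↦ -(π - 6 * t) ^ 2 / 48) ((π - 6 * t) / 4) t :=
    (((((hasDerivAt_id' t).const_mul 6).const_sub π).fun_pow 2).fun_neg.div_const 48).congr_deriv
      (by ring)
  have h := intervalIntegral.integral_eq_sub_of_hasDerivAt (a := π / 6) (b := x) (f' := fun _ ↦ 0)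
    (f := fun t ↦ segmentPrimitive D t 1 - segmentPrimitive D t (2 * sin t) -
      ((-(π - 6 * t) ^ 2 / 48 : ℝ) + pairPrimitive t * Complex.I))
    (fun t ht ↦ by
      rw [Set.uIcc_of_ge hx₁] at ht
      have ht₀ := hx₀.trans_le ht.1
      have ht₁ : t < π / 4 := by linarith [ht.2, pi_pos]
      exact ((hasDerivAt_segmentPrimitive_one_sub hD ht₀ ht₁).fun_sub
        ((hpoly t).ofReal_comp.fun_add ((hasDerivAt_pairPrimitive ht₀
          (by linarith)).ofReal_comp.mul_const Complex.I))).congr_deriv (sub_self _))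
    intervalIntegrable_const
  rw [intervalIntegral.integral_zero, sin_pi_div_six, pairPrimitive_pi_div_six,
    mul_one_div_cancel two_ne_zero, mul_div_cancel₀ _ (by norm_num : (6 : ℝ) ≠ 0), sub_self] at h
  norm_num at h
  push_cast at h ⊢
  linear_combination -h

end

theorem two_mul_sin_mem_Ioo {x : ℝ} (hx₀ : 0 < x) (hx₁ : x < π / 6) :
    2 * sin x ∈ Set.Ioo 0 1 := by
  have hsin := sin_lt_sin_of_lt_of_le_pi_div_two (by linarith) (by linarith) hx₁
  rw [sin_pi_div_six] at hsin
  exact ⟨by linarith [sin_pos_of_pos_of_lt_pi hx₀ (by linarith)], by linarith⟩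

theorem logKernel_two_mul_sin {x : ℝ} (hx₀ : 0 < x) (hx₁ : x < π / 6) :
    logKernel (2 * sin x) =
      logTwoSin x ^ 2 / 2 - (π - 6 * x) ^ 2 / 48 + tan x * pairPrimitive x := by
  obtain ⟨D, hD⟩ := exists_hasDerivAt_neg_log_div_one_sub
  obtain ⟨hv₀, hv₁⟩ := two_mul_sin_mem_Ioo hx₀ hx₁
  have hquad := one_sub_two_mul_sin_mul_add_sq_pos (x := x) hx₀ (by linarith)
  have hpos {s : ℝ} (hs : s ∈ Set.uIcc (2 * sin x) 1) : 0 < s ∧ s ≤ 1 := by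
    rw [Set.uIcc_of_le hv₁.le] at hs
    exact ⟨hv₀.trans_le hs.1, hs.2⟩
  have hderiv : ∀ s ∈ Set.uIcc (2 * sin x) 1, _ := fun s hs ↦
    hasDerivAt_re_segmentPrimitive_add hD hx₀ (by linarith) (hpos hs).1 (hpos hs).2
  have hcont : ContinuousOn (fun s ↦ -log s / (s * (1 - 2 * sin x * s + s ^ 2)))
      (Set.uIcc (2 * sin x) 1) := by
    refine ContinuousOn.div (continuousOn_log.mono fun s hs ↦ (hpos hs).1.ne').neg
      (by fun_prop) fun s hs ↦ (mul_pos (hpos hs).1 (hquad s)).ne'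
  have hdiff := segmentPrimitive_one_sub hD hx₀ hx₁.le
  have hre := congrArg Complex.re hdiff
  have him := congrArg Complex.im hdiff
  simp only [Complex.add_re, Complex.add_im, Complex.sub_re, Complex.sub_im, Complex.re_ofReal_mul,
    Complex.im_ofReal_mul, Complex.ofReal_re, Complex.ofReal_im, Complex.I_re,
    Complex.I_im] at hre him
  rw [logKernel, intervalIntegral.integral_eq_sub_of_hasDerivAt hderiv hcont.intervalIntegrable,
    log_one, logTwoSin]
  linear_combination hre + tan x * him

end KernelClosedForm

section DoubleSeries

theorem integral_sq_mul_pairPrimitive :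
    ∫ x in 0..π / 6, x ^ 2 * pairPrimitive x =
      -(1 / 3) * ∫ x in 0..π / 6, x ^ 3 * logTwoSinPair x := by
  have hle : 0 ≤ π / 6 := by positivity
  have hint : IntervalIntegrable (fun x ↦ x ^ 2 * pairPrimitive x) volume 0 (π / 6) :=
    Continuous.intervalIntegrable (by have := continuous_pairPrimitive; fun_prop) _ _
  have hint' : IntervalIntegrable (fun x ↦ 1 / 3 * (x ^ 3 * logTwoSinPair x)) volume 0 (π / 6) :=
    ((intervalIntegrable_logTwoSinPair _ _).continuousOn_mul (by fun_prop)).const_mul _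
  have hparts := intervalIntegral.integral_eq_sub_of_hasDerivAt_of_le hle
    (f := fun x ↦ x ^ 3 / 3 * pairPrimitive x)
    (f' := fun x ↦ x ^ 2 * pairPrimitive x + 1 / 3 * (x ^ 3 * logTwoSinPair x))
    (Continuous.continuousOn (by have := continuous_pairPrimitive; fun_prop))
    (fun x hx ↦ (((hasDerivAt_pow 3 x).div_const 3).fun_mul
      (hasDerivAt_pairPrimitive hx.1 (by linarith [hx.2, pi_pos]))).congr_deriv (by norm_num; ring))
    (hint.add hint')
  rw [intervalIntegral.integral_add hint hint', intervalIntegral.integral_const_mul,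
    pairPrimitive_pi_div_six] at hparts
  linarith

theorem aperyDouble_eq_sub_integral : aperyDouble = centralBinomFive -
    1 / 3 * (∫ x in 0..π / 6, (x ^ 2 * (π - 6 * x) ^ 2) * cot x) -
      16 / 3 * ∫ x in 0..π / 6, x ^ 3 * logTwoSinPair x := by
  have hle : 0 ≤ π / 6 := by positivity
  have hcube : IntervalIntegrable (fun x ↦ 8 * x ^ 2 * logTwoSin x ^ 2 * cot x) volume 0 (π / 6) :=
    (intervalIntegrable_sq_mul_logTwoSin_sq_mul_cot.const_mul 8).congr fun x _ ↦ by ring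
  have hcot : IntervalIntegrable (fun x ↦ 1 / 3 * ((x ^ 2 * (π - 6 * x) ^ 2) * cot x)) volume
      0 (π / 6) :=
    ((intervalIntegrable_mul_mul_cot (f := fun x ↦ x * (π - 6 * x) ^ 2) (by fun_prop) hle
      (by linarith [pi_pos])).const_mul (1 / 3)).congr fun x _ ↦ by ring
  have hpair : IntervalIntegrable (fun x ↦ 16 * (x ^ 2 * pairPrimitive x)) volume 0 (π / 6) :=
    Continuous.intervalIntegrable (by have := continuous_pairPrimitive; fun_prop) _ _
  calc aperyDouble
    _ = ∫ x in 0..π / 6, (8 * x ^ 2 * logTwoSin x ^ 2 * cot x -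
        1 / 3 * ((x ^ 2 * (π - 6 * x) ^ 2) * cot x) + 16 * (x ^ 2 * pairPrimitive x)) := by
      rw [aperyDouble_eq_integral_logKernel]
      refine intervalIntegral.integral_congr_Ioo_of_le hle fun x hx ↦ ?_
      have hsin := (sin_pos_of_pos_of_lt_pi hx.1 (by linarith [hx.2, pi_pos])).ne'
      have hcos := (cos_pos_of_mem_Ioo (x := x) ⟨by linarith [hx.1], by linarith [hx.2]⟩).ne'
      simp only [logKernel_two_mul_sin hx.1 hx.2, tan_eq_sin_div_cos, cot_eq_cos_div_sin]
      field_simp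
      ring
    _ = _ := by
      rw [intervalIntegral.integral_add (hcube.sub hcot) hpair,
        intervalIntegral.integral_sub hcube hcot, ← centralBinomFive_eq_integral,
        intervalIntegral.integral_const_mul, intervalIntegral.integral_const_mul,
        integral_sq_mul_pairPrimitive]
      ring

end DoubleSeries

section Evaluation

theorem logTwoSin_pi_div_six : logTwoSin (π / 6) = 0 := by
  simp [logTwoSin]

theorem integral_cubic_mul_logTwoSin (a b c : ℝ) :
    ∫ x in 0..π / 6, (a * x + b * x ^ 2 + c * x ^ 3) * logTwoSin x =
      -((a * (π / 6) + b * (π / 6) ^ 2 + c * (π / 6) ^ 3) * dilateSum sin 2 (π / 6) / 2 +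
        ((a + 2 * b * (π / 6) + 3 * c * (π / 6) ^ 2) / 3 - a) * zeta 3 / 4 -
        (2 * b + π * c) * dilateSum sin 4 (π / 6) / 8 + 29 / 144 * c * zeta 5) := by
  set p : ℝ[X] := C a * X + C b * X ^ 2 + C c * X ^ 3 with hp
  have hdeg : p.natDegree ≤ 4 := by rw [hp]; compute_degree!
  have heval (x : ℝ) : a * x + b * x ^ 2 + c * x ^ 3 = p.eval x := by simp [hp]
  simp only [heval]
  rw [integral_eval_mul_logTwoSin hdeg le_rfl (by positivity) (by linarith [pi_pos])]
  simp only [logSinePrimitive, dilateSum_sin_zero, dilateSum_cos_zero,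
    dilateSum_cos_pi_div_six (show 2 ≤ 3 by norm_num),
    dilateSum_cos_pi_div_six (show 2 ≤ 5 by norm_num)]
  simp [hp, Function.iterate_succ_apply, -map_pow, -map_mul, -map_div₀]
  field_simp
  ring

theorem integral_quartic_mul_cot (a b c : ℝ) :
    ∫ x in 0..π / 6, (a * x ^ 2 + b * x ^ 3 + c * x ^ 4) * cot x =
      -∫ x in 0..π / 6, (2 * a * x + 3 * b * x ^ 2 + 4 * c * x ^ 3) * logTwoSin x := by
  set p : ℝ[X] := X * (C a * X + C b * X ^ 2 + C c * X ^ 3) with hp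
  have hdeg : p.natDegree ≤ 5 := by rw [hp]; compute_degree!
  have hdeg' : (derivative p).natDegree ≤ 4 := (natDegree_derivative_le p).trans (by lia)
  have heval (x : ℝ) : a * x ^ 2 + b * x ^ 3 + c * x ^ 4 = p.eval x := by simp [hp]; ring
  have heval' (x : ℝ) : 2 * a * x + 3 * b * x ^ 2 + 4 * c * x ^ 3 = (derivative p).eval x := by
    simp [hp]; ring
  simp only [heval, heval']
  rw [integral_eval_mul_cot hdeg (dvd_mul_right _ _) (by positivity) (by linarith [pi_pos]),
    integral_eval_mul_logTwoSin hdeg' le_rfl (by positivity) (by linarith [pi_pos]),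
    logTwoSin_pi_div_six]
  ring

theorem integral_sub_cube_mul_logTwoSin :
    ∫ x in π / 6..π / 4, (π / 2 - 2 * x) ^ 3 * logTwoSin x =
      6805 / 4608 * zeta 5 - π ^ 2 / 72 * zeta 3 + π ^ 3 / 432 * dilateSum sin 2 (π / 6) -
        π / 2 * dilateSum sin 4 (π / 6) := by
  set p : ℝ[X] := C (π ^ 3 / 8) - C (3 / 2 * π ^ 2) * X + C (6 * π) * X ^ 2 - 8 * X ^ 3 with hp
  have hdeg : p.natDegree ≤ 4 := by rw [hp]; compute_degree!
  have heval (x : ℝ) : (π / 2 - 2 * x) ^ 3 = p.eval x := by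
    simp [hp, -map_pow, -map_mul, -map_div₀]; ring
  simp only [heval]
  rw [integral_eval_mul_logTwoSin hdeg (by positivity) (by linarith [pi_pos])
    (by linarith [pi_pos])]
  simp only [logSinePrimitive, dilateSum_cos_pi_div_six (show 2 ≤ 3 by norm_num),
    dilateSum_cos_pi_div_six (show 2 ≤ 5 by norm_num),
    dilateSum_cos_pi_div_four (show 2 ≤ 3 by norm_num),
    dilateSum_cos_pi_div_four (show 2 ≤ 5 by norm_num)]
  simp [hp, Function.iterate_succ_apply, -map_pow, -map_mul, -map_div₀]
  field_simp
  ring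

theorem integral_cube_mul_logTwoSinPair :
    ∫ x in 0..π / 6, x ^ 3 * logTwoSinPair x =
      (∫ x in 0..π / 6, (0 * x + 0 * x ^ 2 + 2 * x ^ 3) * logTwoSin x) +
        2 * ∫ x in π / 6..π / 4, (π / 2 - 2 * x) ^ 3 * logTwoSin x := by
  have hcomp := intervalIntegral.integral_comp_sub_mul (a := 0) (b := π / 6)
    (fun x ↦ (π / 2 - 2 * x) ^ 3 * logTwoSin x) (one_div_ne_zero two_ne_zero) (π / 4)
  rw [show π / 4 - 1 / 2 * (π / 6) = π / 6 by ring, mul_zero, sub_zero, one_div, inv_inv,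
    smul_eq_mul] at hcomp
  rw [← hcomp, ← intervalIntegral.integral_add]
  · congr! 2 with x
    rw [logTwoSinPair, inv_mul_eq_div]
    ring
  · exact (intervalIntegrable_logTwoSin _ _).continuousOn_mul (by fun_prop)
  · simp only [inv_mul_eq_div]
    exact (intervalIntegrable_logTwoSin_comp _ _).continuousOn_mul (by fun_prop)

theorem centralBinomFive_eq :
    centralBinomFive =
      (∫ x in 0..π / 6, (-4 * π ^ 2 * x + 32 * π * x ^ 2 + -48 * x ^ 3) * logTwoSin x) -
        16 * zeta 5 + 4 / 3 * π ^ 2 * zeta 3 := by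
  have hcube : centralBinomFive = 8 * ∫ x in 0..π / 6, x ^ 2 * logTwoSin x ^ 2 * cot x := by
    rw [centralBinomFive_eq_integral, ← intervalIntegral.integral_const_mul]
    congr! 2
    ring
  have hcot : ∫ x in 0..π / 6, x ^ 2 * (π / 2 - x) ^ 2 * cot x =
      ∫ x in 0..π / 6, (π ^ 2 / 4 * x ^ 2 + -π * x ^ 3 + 1 * x ^ 4) * cot x := by
    congr! 3
    ring
  have hlog : ∫ x in 0..π / 6, x ^ 2 * (π / 2 - x) * logTwoSin x =
      ∫ x in 0..π / 6, (0 * x + π / 2 * x ^ 2 + -1 * x ^ 3) * logTwoSin x := by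
    congr! 3
    ring
  rw [hcube, integral_sq_mul_logTwoSin_sq_mul_cot, hcot, hlog, integral_quartic_mul_cot]
  simp only [integral_cubic_mul_logTwoSin]
  ring

theorem aperyDouble_eq :
    aperyDouble = centralBinomFive +
      (∫ x in 0..π / 6, (2 / 3 * π ^ 2 * x + -12 * π * x ^ 2 + 112 / 3 * x ^ 3) * logTwoSin x) -
        32 / 3 * ∫ x in π / 6..π / 4, (π / 2 - 2 * x) ^ 3 * logTwoSin x := by
  have hcot : ∫ x in 0..π / 6, (x ^ 2 * (π - 6 * x) ^ 2) * cot x =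
      ∫ x in 0..π / 6, (π ^ 2 * x ^ 2 + -12 * π * x ^ 3 + 36 * x ^ 4) * cot x := by
    congr! 3
    ring
  rw [aperyDouble_eq_sub_integral, hcot, integral_quartic_mul_cot, integral_cube_mul_logTwoSinPair]
  simp only [integral_cubic_mul_logTwoSin]
  ring

theorem nine_mul_centralBinomFive_sub_two_mul_aperyDouble :
    9 * centralBinomFive - 2 * aperyDouble = 53 / 24 * zeta 5 + π ^ 2 / 9 * zeta 3 := by
  rw [aperyDouble_eq, centralBinomFive_eq, integral_cubic_mul_logTwoSin,
    integral_cubic_mul_logTwoSin, integral_sub_cube_mul_logTwoSin]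
  ring

end Evaluation

end AlternatingApery

theorem stmt_11 :
    Tendsto (fun N => ∑ n ∈ Finset.range N,
      (-1:ℝ)^(n+1) / (((n:ℝ)+1)^3 * ((2*(n+1)).choose (n+1) : ℝ)) *
        (10 * A 2 (n+1) - (-1:ℝ)^(n+1) / ((n:ℝ)+1)^2))
      atTop (𝓝 (29 * zeta 5 / 6 - Real.pi^2 * zeta 3 / 18)) := by
  have h := AlternatingApery.tendsto_sum_mainTerm AlternatingApery.hasSum_eulerSum
  rw [AlternatingApery.nine_mul_centralBinomFive_sub_two_mul_aperyDouble] at h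
  simp only [AlternatingApery.mainTerm, Nat.centralBinom_eq_two_mul_choose] at h
  convert h using 2
  ring
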